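/- arXiv:1309.2459 — 8 statements merged into one kernel-verified Lean document; each statement's English description precedes it below -/
import Mathlib

section
/- Let Ω ⊆ ℝ² be open, let f : Ω → ℝ be C², and let p ∈ Ω. Set B := 1 − f_x² − f_y². Suppose that f satisfies the zero mean curvature equation (1 − f_y²) f_xx + 2 f_x f_y f_xy + (1 − f_x²) f_yy = 0 at p and that B(p) = 0. Then the gradient ∇B(p) = (B_x(p), B_y(p)) is nonzero if and only if the Hessian determinant f_xx(p) f_yy(p) − f_xy(p)² is nonzero. -/
/-!
Write `v = ∇f(p)` and let `H` be the Hessian matrix of `f` at `p`. The condition `B(p) = 0` says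
that `v` is a unit vector, so that `1 - f_y² = f_x²` and `1 - f_x² = f_y²` at `p`, and the zero mean
curvature equation reads `vᵀ H v = 0`. The chain rule gives `∇B(p) = -2 Hᵀ v`, which is `-2 H v` by
the symmetry of second derivatives. In the orthonormal basis formed by `v` and its rotation `w` by a
right angle, the matrix of `H` has entries `vᵀ H v = 0`, `wᵀ H v` (twice) and `wᵀ H w`. Hence
`H v = (wᵀ H v) w` and `det H = -(wᵀ H v)²`, and both vanish exactly when `wᵀ H v` does.
-/

open Set

/-- Partial derivative in the first (x) direction. -/
noncomputable def pd1 {E : Type*} [NormedAddCommGroup E] [NormedSpace ℝ E]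
    (f : ℝ × ℝ → E) (q : ℝ × ℝ) : E := fderiv ℝ f q (1, 0)

/-- Partial derivative in the second (y) direction. -/
noncomputable def pd2 {E : Type*} [NormedAddCommGroup E] [NormedSpace ℝ E]
    (f : ℝ × ℝ → E) (q : ℝ × ℝ) : E := fderiv ℝ f q (0, 1)

/-- B = 1 - f_x^2 - f_y^2. -/
noncomputable def Bfun (f : ℝ × ℝ → ℝ) (q : ℝ × ℝ) : ℝ :=
  1 - (pd1 f q) ^ 2 - (pd2 f q) ^ 2

/-- The zero mean curvature equation at a point:
    (1 - f_y²) f_xx + 2 f_x f_y f_xy + (1 - f_x²) f_yy = 0. -/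
def ZMCAt (f : ℝ × ℝ → ℝ) (q : ℝ × ℝ) : Prop :=
  (1 - (pd2 f q) ^ 2) * pd1 (pd1 f) q
    + 2 * pd1 f q * pd2 f q * pd2 (pd1 f) q
    + (1 - (pd1 f q) ^ 2) * pd2 (pd2 f) q = 0

open scoped Matrix Topology

section LinearAlgebra

variable {R : Type*} [CommRing R]

/-- The rotation of a plane vector by a right angle, completing a unit vector `v` to an orthonormal
basis `v`, `perp v`. -/
def perp (v : Fin 2 → R) : Fin 2 → R := ![-v 1, v 0]

lemma dotProduct_self_smul_eq (v u : Fin 2 → R) :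
    (v ⬝ᵥ v) • u = (v ⬝ᵥ u) • v + (perp v ⬝ᵥ u) • perp v := by
  ext i
  fin_cases i <;>
    simp only [perp, Matrix.vec2_dotProduct, Pi.add_apply, Pi.smul_apply, smul_eq_mul,
      Fin.zero_eta, Fin.mk_one, Matrix.cons_val_zero, Matrix.cons_val_one] <;>
    ring

lemma sq_dotProduct_self_mul_det (H : Matrix (Fin 2) (Fin 2) R) (v : Fin 2 → R) :
    (v ⬝ᵥ v) ^ 2 * H.det =
      (v ⬝ᵥ H *ᵥ v) * (perp v ⬝ᵥ H *ᵥ perp v) - (v ⬝ᵥ H *ᵥ perp v) * (perp v ⬝ᵥ H *ᵥ v) := by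
  simp only [perp, Matrix.det_fin_two, Matrix.mulVec, Matrix.vec2_dotProduct, Matrix.cons_val_zero,
    Matrix.cons_val_one]
  ring

section Isotropic

variable {H : Matrix (Fin 2) (Fin 2) R} {v : Fin 2 → R}

lemma mulVec_eq_smul_perp_of_isotropic (hv : v ⬝ᵥ v = 1) (hiso : v ⬝ᵥ H *ᵥ v = 0) :
    H *ᵥ v = (perp v ⬝ᵥ H *ᵥ v) • perp v := by
  simpa only [hv, hiso, one_smul, zero_smul, zero_add] using dotProduct_self_smul_eq v (H *ᵥ v)

lemma det_eq_neg_sq_of_isotropic (hH : H.IsSymm) (hv : v ⬝ᵥ v = 1) (hiso : v ⬝ᵥ H *ᵥ v = 0) :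
    H.det = -(perp v ⬝ᵥ H *ᵥ v) ^ 2 := by
  have hcross : v ⬝ᵥ H *ᵥ perp v = perp v ⬝ᵥ H *ᵥ v := by
    rw [← Matrix.dotProduct_transpose_mulVec, hH.eq]
  have hdet := sq_dotProduct_self_mul_det H v
  rw [hv, hiso, hcross] at hdet
  linear_combination hdet

theorem mulVec_eq_zero_iff_det_eq_zero_of_isotropic [IsReduced R] (hH : H.IsSymm)
    (hv : v ⬝ᵥ v = 1) (hiso : v ⬝ᵥ H *ᵥ v = 0) : H *ᵥ v = 0 ↔ H.det = 0 := by
  rw [det_eq_neg_sq_of_isotropic hH hv hiso, neg_eq_zero, sq_eq_zero_iff]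
  constructor <;> intro h
  · rw [h, dotProduct_zero]
  · rw [mulVec_eq_smul_perp_of_isotropic hv hiso, h, zero_smul]

end Isotropic

end LinearAlgebra

section PartialDerivatives

lemma fderiv_fderiv_apply_const {𝕜 E F : Type*} [NontriviallyNormedField 𝕜]
    [NormedAddCommGroup E] [NormedSpace 𝕜 E] [NormedAddCommGroup F] [NormedSpace 𝕜 F]
    {f : E → F} {p : E} (hf : DifferentiableAt 𝕜 (fderiv 𝕜 f) p) (v w : E) :
    fderiv 𝕜 (fun q => fderiv 𝕜 f q v) p w = fderiv 𝕜 (fderiv 𝕜 f) p w v := by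
  simp [fderiv_clm_apply hf (differentiableAt_const v)]

variable {E : Type*} [NormedAddCommGroup E] [NormedSpace ℝ E] {f : ℝ × ℝ → E} {p : ℝ × ℝ}

lemma differentiableAt_pd1 (hf : DifferentiableAt ℝ (fderiv ℝ f) p) :
    DifferentiableAt ℝ (pd1 f) p :=
  hf.clm_apply (differentiableAt_const _)

lemma differentiableAt_pd2 (hf : DifferentiableAt ℝ (fderiv ℝ f) p) :
    DifferentiableAt ℝ (pd2 f) p :=
  hf.clm_apply (differentiableAt_const _)

lemma pd1_pd2_eq_pd2_pd1 (hf : ∀ᶠ q in 𝓝 p, DifferentiableAt ℝ f q)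
    (hf' : DifferentiableAt ℝ (fderiv ℝ f) p) : pd1 (pd2 f) p = pd2 (pd1 f) p :=
  calc pd1 (pd2 f) p
    _ = fderiv ℝ (fderiv ℝ f) p (1, 0) (0, 1) := fderiv_fderiv_apply_const hf' _ _
    _ = fderiv ℝ (fderiv ℝ f) p (0, 1) (1, 0) :=
      second_derivative_symmetric_of_eventually (hf.mono fun _ hq => hq.hasFDerivAt)
        hf'.hasFDerivAt _ _
    _ = pd2 (pd1 f) p := (fderiv_fderiv_apply_const hf' _ _).symm

end PartialDerivatives

section Hessian

variable {f : ℝ × ℝ → ℝ} {p : ℝ × ℝ}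

/-- The gradient of `f` at `p`, as a coordinate vector so that matrices can act on it. -/
noncomputable def grad (f : ℝ × ℝ → ℝ) (p : ℝ × ℝ) : Fin 2 → ℝ := ![pd1 f p, pd2 f p]

/-- The Hessian matrix of `f` at `p`. Its rows are the gradients of `pd1 f` and `pd2 f`, so that its
symmetry is the equality of the mixed partial derivatives. -/
noncomputable def hessian (f : ℝ × ℝ → ℝ) (p : ℝ × ℝ) : Matrix (Fin 2) (Fin 2) ℝ :=
  Matrix.of ![grad (pd1 f) p, grad (pd2 f) p]

lemma isSymm_hessian_iff : (hessian f p).IsSymm ↔ pd1 (pd2 f) p = pd2 (pd1 f) p := by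
  simp [Matrix.IsSymm.ext_iff, Fin.forall_fin_two, hessian, grad, eq_comm (a := pd1 (pd2 f) p)]

lemma det_hessian_of_isSymm (hH : (hessian f p).IsSymm) :
    (hessian f p).det = pd1 (pd1 f) p * pd2 (pd2 f) p - pd2 (pd1 f) p ^ 2 := by
  simp [Matrix.det_fin_two, hessian, grad, isSymm_hessian_iff.mp hH, sq]

lemma Bfun_eq_one_sub_dotProduct (f : ℝ × ℝ → ℝ) (p : ℝ × ℝ) :
    Bfun f p = 1 - grad f p ⬝ᵥ grad f p := by
  simp only [Bfun, grad, Matrix.vec2_dotProduct']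
  ring

lemma zmcAt_iff_isotropic (hH : (hessian f p).IsSymm) (hv : grad f p ⬝ᵥ grad f p = 1) :
    ZMCAt f p ↔ grad f p ⬝ᵥ hessian f p *ᵥ grad f p = 0 := by
  have hmixed := isSymm_hessian_iff.mp hH
  simp only [grad, Matrix.vec2_dotProduct'] at hv
  simp only [ZMCAt, hessian, grad, Matrix.mulVec, Matrix.of_apply, Matrix.vec2_dotProduct,
    Matrix.cons_val_zero, Matrix.cons_val_one, hmixed]
  constructor <;> intro h
  · linear_combination h + (pd1 (pd1 f) p + pd2 (pd2 f) p) * hv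
  · linear_combination h - (pd1 (pd1 f) p + pd2 (pd2 f) p) * hv

lemma fderiv_Bfun_apply (h₁ : DifferentiableAt ℝ (pd1 f) p) (h₂ : DifferentiableAt ℝ (pd2 f) p)
    (w : ℝ × ℝ) :
    fderiv ℝ (Bfun f) p w =
      -2 * (fderiv ℝ (pd1 f) p w * pd1 f p + fderiv ℝ (pd2 f) p w * pd2 f p) := by
  have hB : HasFDerivAt (Bfun f) _ p :=
    ((h₁.hasFDerivAt.pow 2).const_sub 1).sub (h₂.hasFDerivAt.pow 2)
  simp only [hB.fderiv, Nat.add_one_sub_one, pow_one, nsmul_eq_mul, Nat.cast_ofNat, sub_apply,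
    neg_apply, smul_apply, smul_eq_mul]
  ring

lemma grad_Bfun (h₁ : DifferentiableAt ℝ (pd1 f) p) (h₂ : DifferentiableAt ℝ (pd2 f) p) :
    grad (Bfun f) p = (-2 : ℝ) • ((hessian f p)ᵀ *ᵥ grad f p) := by
  ext i
  fin_cases i
  · simpa [grad, hessian, Matrix.vec2_dotProduct, pd1] using fderiv_Bfun_apply h₁ h₂ (1, 0)
  · simpa [grad, hessian, Matrix.vec2_dotProduct, pd2] using fderiv_Bfun_apply h₁ h₂ (0, 1)

end Hessian

theorem stmt0_general {f : ℝ × ℝ → ℝ} {p : ℝ × ℝ} (hf : ∀ᶠ q in 𝓝 p, DifferentiableAt ℝ f q)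
    (hf' : DifferentiableAt ℝ (fderiv ℝ f) p) (hzmc : ZMCAt f p) (hB : Bfun f p = 0) :
    (pd1 (Bfun f) p, pd2 (Bfun f) p) ≠ (0, 0) ↔
      pd1 (pd1 f) p * pd2 (pd2 f) p - (pd2 (pd1 f) p) ^ 2 ≠ 0 := by
  have hH : (hessian f p).IsSymm := isSymm_hessian_iff.mpr (pd1_pd2_eq_pd2_pd1 hf hf')
  have hv : grad f p ⬝ᵥ grad f p = 1 := by linarith [Bfun_eq_one_sub_dotProduct f p]
  have hiso : grad f p ⬝ᵥ hessian f p *ᵥ grad f p = 0 := (zmcAt_iff_isotropic hH hv).mp hzmc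
  have hgrad : grad (Bfun f) p = (-2 : ℝ) • (hessian f p *ᵥ grad f p) := by
    rw [grad_Bfun (differentiableAt_pd1 hf') (differentiableAt_pd2 hf'), hH.eq]
  refine not_congr ?_
  calc (pd1 (Bfun f) p, pd2 (Bfun f) p) = (0, 0)
    _ ↔ grad (Bfun f) p = 0 := by simp [grad]
    _ ↔ hessian f p *ᵥ grad f p = 0 := by simp [hgrad]
    _ ↔ (hessian f p).det = 0 := mulVec_eq_zero_iff_det_eq_zero_of_isotropic hH hv hiso
    _ ↔ pd1 (pd1 f) p * pd2 (pd2 f) p - (pd2 (pd1 f) p) ^ 2 = 0 := by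
      rw [det_hessian_of_isSymm hH]

/-- under the ZMC equation and B(p) = 0, the gradient of B is nonzero
    at p iff the Hessian determinant of f is nonzero at p. -/
theorem stmt0 (Ω : Set (ℝ × ℝ)) (hΩ : IsOpen Ω) (f : ℝ × ℝ → ℝ)
    (hf : ContDiffOn ℝ 2 f Ω) (p : ℝ × ℝ) (hp : p ∈ Ω)
    (hzmc : ZMCAt f p) (hB : Bfun f p = 0) :
    (pd1 (Bfun f) p, pd2 (Bfun f) p) ≠ (0, 0) ↔
      pd1 (pd1 f) p * pd2 (pd2 f) p - (pd2 (pd1 f) p) ^ 2 ≠ 0 := by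
  have hfp : ContDiffAt ℝ 2 f p := hf.contDiffAt (hΩ.mem_nhds hp)
  exact stmt0_general ((hfp.eventually (by simp)).mono fun _ hq => hq.differentiableAt two_ne_zero)
    ((hfp.fderiv_right (m := 1) (by norm_num)).differentiableAt one_ne_zero) hzmc hB
end

section
/- Let Ω ⊆ ℝ² be open, f : Ω → ℝ a C² function, and σ = (x, y) : (a, b) → Ω a C² curve such that for all t ∈ (a,b): f(x(t), y(t)) = t, x'(t)² + y'(t)² = 1, and B(x(t), y(t)) = 0, where B := 1 − f_x² − f_y². Then for all t ∈ (a,b): x'(t) = f_x(x(t), y(t)), y'(t) = f_y(x(t), y(t)), and (x''(t), y''(t)) = −(1/2) (B_x(x(t),y(t)), B_y(x(t),y(t))). In particular, the null curve t ↦ (t, x(t), y(t)) in ℝ³₁ is non-degenerate at t if and only if ∇B(x(t), y(t)) ≠ 0. -/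
/-!
Differentiating `f (σ t) = t` gives `⟨∇f, σ'⟩ = 1`. Both `σ'` and, because `B ∘ σ = 0`, `∇f ∘ σ` are
unit vectors, so the equality case of Cauchy–Schwarz gives `σ' = ∇f ∘ σ`. Hence
`σ'' = Hess f · ∇f`, whereas `B = 1 - |∇f|²` gives `∇B = -2 (Hess f)ᵀ · ∇f`; the symmetry of the
Hessian identifies the two up to the factor `-1/2`. Finally `(t, σ t)` has velocity `(1, σ')` and
acceleration `(0, σ'')`, so comparing first components shows that these are proportional only if
`σ'' = 0`.
-/

open Set

open Filter Topology

variable {ι E : Type*} [NormedAddCommGroup E] [NormedSpace ℝ E]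

/-- A curve `γ` is non-degenerate at `t` if its acceleration is not a multiple of its velocity. -/
def IsNondegenerateAt (γ : ℝ → E) (t : ℝ) : Prop :=
  ¬ ∃ c : ℝ, deriv (deriv γ) t = c • deriv γ t

theorem isNondegenerateAt_graph_iff {σ σ' : ℝ → E} {t : ℝ} {a : E}
    (hσ : ∀ᶠ s in 𝓝 t, HasDerivAt σ (σ' s) s) (hσ' : HasDerivAt σ' a t) :
    IsNondegenerateAt (fun s => (s, σ s)) t ↔ a ≠ 0 := by
  have velocity : deriv (fun s => (s, σ s)) =ᶠ[𝓝 t] fun s => ((1 : ℝ), σ' s) :=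
    hσ.mono fun s hs => ((hasDerivAt_id s).prodMk hs).deriv
  have acceleration : deriv (deriv fun s => (s, σ s)) t = ((0 : ℝ), a) :=
    velocity.deriv_eq.trans ((hasDerivAt_const t (1 : ℝ)).prodMk hσ').deriv
  rw [IsNondegenerateAt, acceleration, velocity.eq_of_nhds, not_iff_not]
  constructor
  · rintro ⟨c, hc⟩
    obtain ⟨h0, ha⟩ := Prod.ext_iff.mp hc
    have hc0 : c = 0 := by simpa using h0.symm
    simpa [hc0] using ha
  · rintro rfl
    exact ⟨0, by simp⟩

variable [Fintype ι]

theorem eq_of_sum_sq_eq_one_of_sum_mul_eq_one {u v : ι → ℝ} (hu : ∑ i, u i ^ 2 = 1)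
    (hv : ∑ i, v i ^ 2 = 1) (huv : ∑ i, u i * v i = 1) : u = v := by
  have hsum : ∑ i, (u i - v i) ^ 2 = 0 := by
    simp only [sub_sq, Finset.sum_add_distrib, Finset.sum_sub_distrib, mul_assoc,
      ← Finset.mul_sum, hu, hv, huv]
    norm_num
  have hzero := (Finset.sum_eq_zero_iff_of_nonneg fun i _ => sq_nonneg (u i - v i)).mp hsum
  exact funext fun i => sub_eq_zero.mp (sq_eq_zero_iff.mp (hzero i (Finset.mem_univ i)))

/-- The gradient of `f` in the constant frame `e`, taken to be orthonormal. A frame is used in place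
of `InnerProductSpace` so that the results apply to `ℝ × ℝ`, whose norm is the sup norm. When `e`
does not span `E` this is the horizontal gradient. -/
noncomputable def frameGradient (e : ι → E) (f : E → ℝ) (q : E) : E :=
  ∑ i, fderiv ℝ f q (e i) • e i

/-- The function `1 - |∇f|²`, with `∇f` taken in the orthonormal frame `e`; it is the function `B`
of the plane, and its zeros are the points where `f` solves the eikonal equation. -/
noncomputable def eikonalDefect (e : ι → E) (f : E → ℝ) (q : E) : ℝ :=
  1 - ∑ i, fderiv ℝ f q (e i) ^ 2

variable {e : ι → E} {f : E → ℝ} {σ : ℝ → E} {t : ℝ}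

theorem coeff_eq_fderiv_of_eikonalDefect_eq_zero {c : ι → ℝ} (hf : DifferentiableAt ℝ f (σ t))
    (hσ : HasDerivAt σ (∑ i, c i • e i) t) (hgraph : ∀ᶠ s in 𝓝 t, f (σ s) = s)
    (hunit : ∑ i, c i ^ 2 = 1) (hB : eikonalDefect e f (σ t) = 0) :
    c = fun i => fderiv ℝ f (σ t) (e i) := by
  have hchain : fderiv ℝ f (σ t) (∑ i, c i • e i) = 1 :=
    (hf.hasFDerivAt.comp_hasDerivAt t hσ).unique
      ((hasDerivAt_id t).congr_of_eventuallyEq hgraph)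
  refine eq_of_sum_sq_eq_one_of_sum_mul_eq_one hunit (sub_eq_zero.mp hB).symm ?_
  simpa only [map_sum, map_smul, smul_eq_mul] using hchain

theorem fderiv_eikonalDefect_apply {q : E} (hf : DifferentiableAt ℝ (fderiv ℝ f) q) (v : E) :
    fderiv ℝ (eikonalDefect e f) q v =
      -2 * fderiv ℝ (fderiv ℝ f) q v (frameGradient e f q) := by
  have hpartial (i : ι) := hf.hasFDerivAt.clm_apply (hasFDerivAt_const (e i) q)
  have hdefect : HasFDerivAt (eikonalDefect e f) _ q :=
    (HasFDerivAt.fun_sum fun i (_ : i ∈ Finset.univ) => (hpartial i).pow 2).const_sub 1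
  rw [hdefect.fderiv]
  simp [frameGradient, Finset.mul_sum, mul_assoc]

theorem hasDerivAt_fderiv_apply_of_hasDerivAt_frameGradient (hf : ContDiffAt ℝ 2 f (σ t))
    (hσ : HasDerivAt σ (frameGradient e f (σ t)) t) (v : E) :
    HasDerivAt (fun s => fderiv ℝ f (σ s) v)
      (-(1 / 2) * fderiv ℝ (eikonalDefect e f) (σ t) v) t := by
  have hf' : DifferentiableAt ℝ (fderiv ℝ f) (σ t) :=
    (hf.fderiv_right (m := 1) (by norm_num)).differentiableAt one_ne_zero
  have hsymm : fderiv ℝ (fderiv ℝ f) (σ t) (frameGradient e f (σ t)) v =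
      fderiv ℝ (fderiv ℝ f) (σ t) v (frameGradient e f (σ t)) :=
    hf.isSymmSndFDerivAt (by simp) _ _
  have hchain := (hf'.hasFDerivAt.comp_hasDerivAt t hσ).clm_apply (hasDerivAt_const t v)
  refine hchain.congr_deriv ?_
  simp [fderiv_eikonalDefect_apply hf', hsymm]

theorem stmt3_general {Ω : Set E} (hΩ : IsOpen Ω) (hf : ContDiffOn ℝ 2 f Ω)
    {I : Set ℝ} (hI : IsOpen I) {c : ℝ → ι → ℝ}
    (hσ : ∀ t ∈ I, HasDerivAt σ (∑ i, c t i • e i) t) (hmem : ∀ t ∈ I, σ t ∈ Ω)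
    (hgraph : ∀ t ∈ I, f (σ t) = t) (hunit : ∀ t ∈ I, ∑ i, c t i ^ 2 = 1)
    (hB : ∀ t ∈ I, eikonalDefect e f (σ t) = 0) (ht : t ∈ I) :
    (∀ i, c t i = fderiv ℝ f (σ t) (e i)) ∧
    (∀ i, HasDerivAt (fun s => c s i)
      (-(1 / 2) * fderiv ℝ (eikonalDefect e f) (σ t) (e i)) t) ∧
    (IsNondegenerateAt (fun s => (s, σ s)) t ↔
      frameGradient e (eikonalDefect e f) (σ t) ≠ 0) := by
  have hfAt {s : ℝ} (hs : s ∈ I) : ContDiffAt ℝ 2 f (σ s) :=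
    hf.contDiffAt (hΩ.mem_nhds (hmem s hs))
  have hnear {p : ℝ → Prop} {s : ℝ} (hs : s ∈ I) (hp : ∀ r ∈ I, p r) : ∀ᶠ r in 𝓝 s, p r :=
    eventually_of_mem (hI.mem_nhds hs) hp
  have hvel : ∀ s ∈ I, c s = fun i => fderiv ℝ f (σ s) (e i) := fun s hs =>
    coeff_eq_fderiv_of_eikonalDefect_eq_zero ((hfAt hs).differentiableAt two_ne_zero) (hσ s hs)
      (hnear hs hgraph) (hunit s hs) (hB s hs)
  have hgrad : HasDerivAt σ (frameGradient e f (σ t)) t := by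
    simpa only [frameGradient, hvel t ht] using hσ t ht
  have hacc (i : ι) : HasDerivAt (fun s => c s i)
      (-(1 / 2) * fderiv ℝ (eikonalDefect e f) (σ t) (e i)) t :=
    (hasDerivAt_fderiv_apply_of_hasDerivAt_frameGradient (hfAt ht) hgrad
      (e i)).congr_of_eventuallyEq (hnear ht fun s hs => congrFun (hvel s hs) i)
  have hσ'' : HasDerivAt (fun s => ∑ i, c s i • e i)
      (-(1 / 2 : ℝ) • frameGradient e (eikonalDefect e f) (σ t)) t := by
    simpa only [frameGradient, Finset.smul_sum, smul_smul] using
      HasDerivAt.fun_sum fun i (_ : i ∈ Finset.univ) => (hacc i).smul_const (e i)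
  refine ⟨congrFun (hvel t ht), hacc, ?_⟩
  rw [isNondegenerateAt_graph_iff (hnear ht hσ) hσ'', smul_ne_zero_iff_right (by norm_num)]

/-- The standard frame of the plane, whose partial derivatives are `pd1` and `pd2`. -/
def planeFrame : Fin 2 → ℝ × ℝ := ![(1, 0), (0, 1)]

theorem sum_smul_planeFrame (c : Fin 2 → ℝ) : ∑ i, c i • planeFrame i = (c 0, c 1) := by
  simp [planeFrame]

theorem hasDerivAt_prodMk_planeFrame {x y : ℝ → ℝ} {x' y' t : ℝ} (hx : HasDerivAt x x' t)
    (hy : HasDerivAt y y' t) :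
    HasDerivAt (fun s => (x s, y s)) (∑ i, ![x', y'] i • planeFrame i) t := by
  rw [sum_smul_planeFrame]
  exact hx.prodMk hy

theorem frameGradient_planeFrame (g : ℝ × ℝ → ℝ) (q : ℝ × ℝ) :
    frameGradient planeFrame g q = (pd1 g q, pd2 g q) :=
  sum_smul_planeFrame _

theorem eikonalDefect_planeFrame (g : ℝ × ℝ → ℝ) : eikonalDefect planeFrame g = Bfun g := by
  ext q
  simp [eikonalDefect, Bfun, planeFrame, pd1, pd2, sub_sub]

/-- if a unit-speed C² curve σ = (x,y) in Ω satisfies f(σ(t)) = t and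
    B(σ(t)) = 0, then σ' = ∇f ∘ σ, σ'' = -(1/2)∇B ∘ σ, and the null curve
    t ↦ (t, x(t), y(t)) is non-degenerate at t iff ∇B(σ(t)) ≠ 0. -/
theorem stmt3 (Ω : Set (ℝ × ℝ)) (hΩ : IsOpen Ω) (f : ℝ × ℝ → ℝ)
    (hf : ContDiffOn ℝ 2 f Ω) (a b : ℝ) (x y : ℝ → ℝ)
    (hx : ContDiffOn ℝ 2 x (Ioo a b)) (hy : ContDiffOn ℝ 2 y (Ioo a b))
    (hmem : ∀ t ∈ Ioo a b, (x t, y t) ∈ Ω)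
    (hgraph : ∀ t ∈ Ioo a b, f (x t, y t) = t)
    (hunit : ∀ t ∈ Ioo a b, (deriv x t) ^ 2 + (deriv y t) ^ 2 = 1)
    (hB : ∀ t ∈ Ioo a b, Bfun f (x t, y t) = 0) :
    ∀ t ∈ Ioo a b,
      deriv x t = pd1 f (x t, y t) ∧
      deriv y t = pd2 f (x t, y t) ∧
      (deriv (deriv x) t, deriv (deriv y) t)
        = (-(1 / 2) * pd1 (Bfun f) (x t, y t), -(1 / 2) * pd2 (Bfun f) (x t, y t)) ∧
      ((¬ ∃ c : ℝ, deriv (deriv (fun s => (s, x s, y s))) t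
          = c • deriv (fun s => (s, x s, y s)) t)
        ↔ (pd1 (Bfun f) (x t, y t), pd2 (Bfun f) (x t, y t)) ≠ (0, 0)) := by
  intro t ht
  obtain ⟨hvel, hacc, hnull⟩ := stmt3_general hΩ hf isOpen_Ioo
    (fun s hs => hasDerivAt_prodMk_planeFrame
      ((hx.differentiableOn two_ne_zero).hasDerivAt (isOpen_Ioo.mem_nhds hs))
      ((hy.differentiableOn two_ne_zero).hasDerivAt (isOpen_Ioo.mem_nhds hs)))
    hmem hgraph (by simpa using hunit) (by simpa only [eikonalDefect_planeFrame] using hB) ht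
  rw [frameGradient_planeFrame] at hnull
  simp only [eikonalDefect_planeFrame] at hacc hnull
  exact ⟨hvel 0, hvel 1, Prod.ext (hacc 0).deriv (hacc 1).deriv, hnull⟩
end

section
/- Let U ⊆ ℂ be a connected open set whose intersection with ℝ contains a nonempty open interval I, and let γ_ℂ : U → ℂ³ be holomorphic such that γ_ℂ(t) ∈ ℝ³ for all t ∈ I and such that the restriction γ := γ_ℂ|_I is a null curve in ℝ³₁, i.e. ⟨γ'(t), γ'(t)⟩ = 0 for t ∈ I. Define φ : U → ℝ³ by φ(u + iv) := Re γ_ℂ(u + iv) (componentwise real part). Then φ is harmonic (φ_uu + φ_vv = 0 on U) and Lorentz-conformal on all of U: ⟨φ_u, φ_u⟩ = ⟨φ_v, φ_v⟩ and ⟨φ_u, φ_v⟩ = 0 at every point of U, where ⟨·,·⟩ is the Lorentz inner product. -/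
/-!
In the coordinates `z = u + iv`, a holomorphic `γ` with `φ = Re γ` has `φ_u = Re γ'` and
`φ_v = Re (i γ')`. A second differentiation gives `φ_uu + φ_vv = Re (γ'' + i² γ'') = 0`.

Extend the inner product to a complex-bilinear form `B`. Then `B(γ', γ')` is holomorphic on `U`,
and on the interval, where `γ'` is real, it equals `⟨γ', γ'⟩ = 0`; by the identity theorem it
vanishes on all of `U`. Its real part is `⟨φ_u, φ_u⟩ - ⟨φ_v, φ_v⟩` and its imaginary part is
`-2⟨φ_u, φ_v⟩`.

The argument is blind to signature and dimension, and `Re` may be any continuous real-linear map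
`ρ` once `Im w` is read as `-ρ (i w)`: the form
`B(x, y) = ⟨ρ x, ρ y⟩ - ⟨ρ (i x), ρ (i y)⟩ - i (⟨ρ (i x), ρ y⟩ + ⟨ρ x, ρ (i y)⟩)`
is always complex-bilinear.
-/

open Set

/-- The Lorentz inner product of ℝ³₁. -/
def lprod (a b : ℝ × ℝ × ℝ) : ℝ :=
  -(a.1 * b.1) + a.2.1 * b.2.1 + a.2.2 * b.2.2

/-- A vector of ℂ³ is real if all three components have vanishing imaginary part. -/
def isRealVec (w : ℂ × ℂ × ℂ) : Prop := w.1.im = 0 ∧ w.2.1.im = 0 ∧ w.2.2.im = 0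

/-- Componentwise real part ℂ³ → ℝ³. -/
def reVec (w : ℂ × ℂ × ℂ) : ℝ × ℝ × ℝ := (w.1.re, w.2.1.re, w.2.2.re)

/-- φ(u,v) = Re γ_ℂ(u+iv). -/
noncomputable def phiOf (γC : ℂ → ℂ × ℂ × ℂ) (q : ℝ × ℝ) : ℝ × ℝ × ℝ :=
  reVec (γC ((q.1 : ℂ) + q.2 * Complex.I))

open Complex Filter Topology

section IdentityTheorem

variable {E : Type*} [NormedAddCommGroup E] [NormedSpace ℂ E]

lemma frequently_nhdsNE_ofReal {p : ℂ → Prop} {t : ℝ} (hp : ∀ᶠ s : ℝ in 𝓝 t, p s) :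
    ∃ᶠ z in 𝓝[≠] (t : ℂ), p z := by
  have hofReal : Tendsto ((↑) : ℝ → ℂ) (𝓝[≠] t) (𝓝[≠] (t : ℂ)) :=
    continuous_ofReal.continuousAt.continuousWithinAt.tendsto_nhdsWithin
      fun _ hs => ofReal_injective.ne hs
  exact hofReal.frequently (hp.filter_mono nhdsWithin_le_nhds).frequently

lemma eqOn_zero_of_forall_Ioo_ofReal [CompleteSpace E] {U : Set ℂ} (hU : IsOpen U)
    (hconn : IsPreconnected U) {a b : ℝ} (hab : a < b) (hsub : ∀ t ∈ Ioo a b, (t : ℂ) ∈ U)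
    {f : ℂ → E} (hf : DifferentiableOn ℂ f U) (hzero : ∀ t ∈ Ioo a b, f t = 0) :
    EqOn f 0 U := by
  obtain ⟨m, hm⟩ := nonempty_Ioo.mpr hab
  exact (hf.analyticOnNhd hU).eqOn_zero_of_preconnected_of_frequently_eq_zero hconn (hsub m hm)
    (frequently_nhdsNE_ofReal ((isOpen_Ioo.eventually_mem hm).mono hzero))

end IdentityTheorem

section RealCurve

variable {E F : Type*} [NormedAddCommGroup E] [NormedSpace ℂ E]
  [NormedAddCommGroup F] [NormedSpace ℝ F] {g : ℂ → E} {t : ℝ}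

lemma hasDerivAt_clm_comp_ofReal (L : E →L[ℝ] F) (hg : DifferentiableAt ℂ g t) :
    HasDerivAt (fun s : ℝ => L (g s)) (L (deriv g t)) t := by
  have hcurve : HasDerivAt (fun s : ℝ => g s) (deriv g t) t := by
    simpa using! hg.hasDerivAt.scomp t ofRealCLM.hasDerivAt
  exact L.hasFDerivAt.comp_hasDerivAt t hcurve

lemma clm_deriv_eq_zero_of_eventually_ofReal (L : E →L[ℝ] F) (hg : DifferentiableAt ℂ g t)
    (hzero : ∀ᶠ s : ℝ in 𝓝 t, L (g s) = 0) : L (deriv g t) = 0 :=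
  (hasDerivAt_clm_comp_ofReal L hg).unique ((hasDerivAt_const t 0).congr_of_eventuallyEq hzero)

end RealCurve

section ComplexBilinear

variable {E G : Type*} [NormedAddCommGroup E] [NormedSpace ℂ E]
  [NormedAddCommGroup G] [NormedSpace ℂ G]

/-- The complex-linear extension `x ↦ T x - i T (i x)` of a continuous real-linear map between
complex spaces; the vector-valued counterpart of `StrongDual.extendRCLike`. -/
noncomputable def complexLinearExtension (T : E →L[ℝ] G) : E →L[ℂ] G where
  toFun x := T x - I • T (I • x)
  map_add' x y := by
    simp only [smul_add, map_add]
    abel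
  map_smul' c x := by
    have hsmul (y : E) : T (c • y) = c.re • T y + c.im • T (I • y) := by
      nth_rw 1 [← re_add_im c]
      simp only [add_smul, mul_smul, coe_smul, map_add, map_smul]
    simp only [smul_comm I c x, hsmul, smul_smul I I x, I_mul_I, neg_one_smul, map_neg,
      RingHom.id_apply, ← coe_smul]
    match_scalars
    · linear_combination re_add_im c
    · linear_combination c.im * I_mul_I - I * re_add_im c
  cont := by fun_prop

/-- The complex-bilinear form induced by a real-bilinear form `c` on a complex space, extended in
each argument in turn. When `c` is a real inner product evaluated on the real parts of two complex
vectors, this is the complex-bilinear extension of that inner product. -/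
noncomputable def complexBilinearExtension (c : E →L[ℝ] E →L[ℝ] ℝ) : E →L[ℂ] E →L[ℂ] ℂ :=
  complexLinearExtension
    ((StrongDual.extendRCLikeₗᵢ : StrongDual ℝ E ≃ₗᵢ[ℝ] StrongDual ℂ E) ∘L c)

lemma complexBilinearExtension_apply (c : E →L[ℝ] E →L[ℝ] ℝ) (x y : E) :
    complexBilinearExtension c x y =
      ↑(c x y - c (I • x) (I • y)) - ↑(c (I • x) y + c x (I • y)) * I := by
  change ((c x y : ℂ) - I * c x (I • y)) - I * (c (I • x) y - I * c (I • x) (I • y)) = _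
  push_cast
  linear_combination (c (I • x) (I • y) : ℂ) * I_mul_I

lemma complexBilinearExtension_self_eq_zero_iff {c : E →L[ℝ] E →L[ℝ] ℝ}
    (hc : ∀ x y, c x y = c y x) {x : E} :
    complexBilinearExtension c x x = 0 ↔ c x x = c (I • x) (I • x) ∧ c x (I • x) = 0 := by
  rw [complexBilinearExtension_apply, hc (I • x) x, Complex.ext_iff]
  simp [sub_eq_zero]

end ComplexBilinear

section RealPart

variable {E F : Type*} [NormedAddCommGroup E] [NormedSpace ℂ E]
  [NormedAddCommGroup F] [NormedSpace ℝ F]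

/-- The map `(u, v) ↦ ρ (g (u + iv))`, where the real-linear `ρ` plays the role of a real part. -/
noncomputable def realPartMap (ρ : E →L[ℝ] F) (g : ℂ → E) (q : ℝ × ℝ) : F := ρ (g (q.1 + q.2 * I))

variable (ρ : E →L[ℝ] F) {g : ℂ → E} {q : ℝ × ℝ}

lemma hasFDerivAt_realPartMap (hg : DifferentiableAt ℂ g (q.1 + q.2 * I)) :
    HasFDerivAt (realPartMap ρ g)
      (ρ ∘L (fderiv ℂ g (q.1 + q.2 * I)).restrictScalars ℝ ∘L
        (equivRealProdCLM.symm : ℝ × ℝ →L[ℝ] ℂ)) q := by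
  rw [← equivRealProdCLM_symm_apply] at hg ⊢
  have hcomp := ρ.hasFDerivAt.comp q
    ((hg.hasFDerivAt.restrictScalars ℝ).comp q equivRealProdCLM.symm.hasFDerivAt)
  refine hcomp.congr_of_eventuallyEq (Eventually.of_forall fun p => ?_)
  simp only [realPartMap, ← equivRealProdCLM_symm_apply, Function.comp_apply]

lemma fderiv_realPartMap_apply (hg : DifferentiableAt ℂ g (q.1 + q.2 * I)) (p : ℝ × ℝ) :
    fderiv ℝ (realPartMap ρ g) q p = ρ ((p.1 + p.2 * I : ℂ) • deriv g (q.1 + q.2 * I)) := by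
  rw [(hasFDerivAt_realPartMap ρ hg).fderiv, ← equivRealProdCLM_symm_apply p,
    ← fderiv_eq_smul_deriv]
  rfl

lemma pd1_realPartMap (hg : DifferentiableAt ℂ g (q.1 + q.2 * I)) :
    pd1 (realPartMap ρ g) q = realPartMap ρ (deriv g) q := by
  simp [pd1, realPartMap, fderiv_realPartMap_apply ρ hg]

lemma pd2_realPartMap (hg : DifferentiableAt ℂ g (q.1 + q.2 * I)) :
    pd2 (realPartMap ρ g) q = realPartMap ρ (I • deriv g) q := by
  simp [pd2, realPartMap, fderiv_realPartMap_apply ρ hg]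

variable {U : Set ℂ}

lemma eventually_add_mul_I_mem (hU : IsOpen U) (hq : (q.1 + q.2 * I : ℂ) ∈ U) :
    ∀ᶠ p : ℝ × ℝ in 𝓝 q, (p.1 + p.2 * I : ℂ) ∈ U :=
  (Continuous.continuousAt (by fun_prop)).eventually (hU.mem_nhds hq)

lemma pd1_pd1_realPartMap [CompleteSpace E] (hU : IsOpen U) (hg : DifferentiableOn ℂ g U)
    (hq : (q.1 + q.2 * I : ℂ) ∈ U) :
    pd1 (pd1 (realPartMap ρ g)) q = realPartMap ρ (deriv (deriv g)) q := by
  have hpd1 : pd1 (realPartMap ρ g) =ᶠ[𝓝 q] realPartMap ρ (deriv g) :=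
    (eventually_add_mul_I_mem hU hq).mono fun p hp =>
      pd1_realPartMap ρ (hg.differentiableAt (hU.mem_nhds hp))
  have hderiv : DifferentiableAt ℂ (deriv g) (q.1 + q.2 * I) :=
    (hg.deriv hU).differentiableAt (hU.mem_nhds hq)
  rw [pd1, hpd1.fderiv_eq, ← pd1, pd1_realPartMap ρ hderiv]

lemma pd2_pd2_realPartMap [CompleteSpace E] (hU : IsOpen U) (hg : DifferentiableOn ℂ g U)
    (hq : (q.1 + q.2 * I : ℂ) ∈ U) :
    pd2 (pd2 (realPartMap ρ g)) q = -realPartMap ρ (deriv (deriv g)) q := by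
  have hpd2 : pd2 (realPartMap ρ g) =ᶠ[𝓝 q] realPartMap ρ (I • deriv g) :=
    (eventually_add_mul_I_mem hU hq).mono fun p hp =>
      pd2_realPartMap ρ (hg.differentiableAt (hU.mem_nhds hp))
  have hderiv : DifferentiableAt ℂ (deriv g) (q.1 + q.2 * I) :=
    (hg.deriv hU).differentiableAt (hU.mem_nhds hq)
  rw [pd2, hpd2.fderiv_eq, ← pd2, pd2_realPartMap ρ (hderiv.const_smul I)]
  simp only [realPartMap, Pi.smul_apply, deriv_const_smul I hderiv, smul_smul, I_mul_I,
    neg_one_smul, map_neg]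

end RealPart

section NullCurve

variable {E F : Type*} [NormedAddCommGroup E] [NormedSpace ℂ E]
  [NormedAddCommGroup F] [NormedSpace ℝ F]
  {ρ : E →L[ℝ] F} {β : F →L[ℝ] F →L[ℝ] ℝ} {γ : ℂ → E}

lemma complexBilinearExtension_deriv_ofReal_eq_zero {t : ℝ} (hγ : DifferentiableAt ℂ γ t)
    (hreal : ∀ᶠ s : ℝ in 𝓝 t, ρ (I • γ s) = 0)
    (hnull : β (deriv (fun s : ℝ => ρ (γ s)) t) (deriv (fun s : ℝ => ρ (γ s)) t) = 0) :
    complexBilinearExtension (β.bilinearComp ρ ρ) (deriv γ t) (deriv γ t) = 0 := by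
  have him : ρ (I • deriv γ t) = 0 := by
    rw [← deriv_const_smul I hγ]
    exact clm_deriv_eq_zero_of_eventually_ofReal ρ (hγ.const_smul I) hreal
  rw [(hasDerivAt_clm_comp_ofReal ρ hγ).deriv] at hnull
  simp [complexBilinearExtension_apply, him, hnull]

lemma complexBilinearExtension_deriv_eqOn_zero [CompleteSpace E] {U : Set ℂ} (hU : IsOpen U)
    (hconn : IsPreconnected U) {a b : ℝ} (hab : a < b) (hsub : ∀ t ∈ Ioo a b, (t : ℂ) ∈ U)
    (hγ : DifferentiableOn ℂ γ U) (hreal : ∀ t ∈ Ioo a b, ρ (I • γ t) = 0)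
    (hnull : ∀ t ∈ Ioo a b,
      β (deriv (fun s : ℝ => ρ (γ s)) t) (deriv (fun s : ℝ => ρ (γ s)) t) = 0) :
    EqOn (fun z => complexBilinearExtension (β.bilinearComp ρ ρ) (deriv γ z) (deriv γ z)) 0 U := by
  have hderiv : DifferentiableOn ℂ (deriv γ) U := hγ.deriv hU
  refine eqOn_zero_of_forall_Ioo_ofReal hU hconn hab hsub (by fun_prop) fun t ht => ?_
  exact complexBilinearExtension_deriv_ofReal_eq_zero
    (hγ.differentiableAt (hU.mem_nhds (hsub t ht)))
    ((isOpen_Ioo.eventually_mem ht).mono hreal) (hnull t ht)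

end NullCurve

theorem stmt5_general {E F : Type*} [NormedAddCommGroup E] [NormedSpace ℂ E] [CompleteSpace E]
    [NormedAddCommGroup F] [NormedSpace ℝ F] (ρ : E →L[ℝ] F) (β : F →L[ℝ] F →L[ℝ] ℝ)
    (hβ : ∀ x y, β x y = β y x)
    {U : Set ℂ} (hU : IsOpen U) (hconn : IsPreconnected U)
    {a b : ℝ} (hab : a < b) (hsub : ∀ t ∈ Ioo a b, (t : ℂ) ∈ U)
    {γ : ℂ → E} (hγ : DifferentiableOn ℂ γ U) (hreal : ∀ t ∈ Ioo a b, ρ (I • γ t) = 0)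
    (hnull : ∀ t ∈ Ioo a b,
      β (deriv (fun s : ℝ => ρ (γ s)) t) (deriv (fun s : ℝ => ρ (γ s)) t) = 0)
    (q : ℝ × ℝ) (hq : (q.1 + q.2 * I : ℂ) ∈ U) :
    pd1 (pd1 (realPartMap ρ γ)) q + pd2 (pd2 (realPartMap ρ γ)) q = 0 ∧
      β (pd1 (realPartMap ρ γ) q) (pd1 (realPartMap ρ γ) q)
        = β (pd2 (realPartMap ρ γ) q) (pd2 (realPartMap ρ γ) q) ∧
      β (pd1 (realPartMap ρ γ) q) (pd2 (realPartMap ρ γ) q) = 0 := by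
  have hγq : DifferentiableAt ℂ γ (q.1 + q.2 * I) := hγ.differentiableAt (hU.mem_nhds hq)
  have hnullq : complexBilinearExtension (β.bilinearComp ρ ρ)
      (deriv γ (q.1 + q.2 * I)) (deriv γ (q.1 + q.2 * I)) = 0 :=
    complexBilinearExtension_deriv_eqOn_zero hU hconn hab hsub hγ hreal hnull hq
  constructor
  · rw [pd1_pd1_realPartMap ρ hU hγ hq, pd2_pd2_realPartMap ρ hU hγ hq, add_neg_cancel]
  · rw [pd1_realPartMap ρ hγq, pd2_realPartMap ρ hγq]
    exact (complexBilinearExtension_self_eq_zero_iff fun x y => hβ (ρ x) (ρ y)).mp hnullq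

section LorentzMinkowski

/-- `reVec` as a continuous real-linear map. -/
noncomputable def reVecCLM : ℂ × ℂ × ℂ →L[ℝ] ℝ × ℝ × ℝ := reCLM.prodMap (reCLM.prodMap reCLM)

lemma reVecCLM_I_smul_eq_zero_iff {w : ℂ × ℂ × ℂ} : reVecCLM (I • w) = 0 ↔ isRealVec w := by
  simp [reVecCLM, isRealVec, Prod.ext_iff]

lemma phiOf_eq_realPartMap (γC : ℂ → ℂ × ℂ × ℂ) : phiOf γC = realPartMap reVecCLM γC := rfl

/-- `lprod` as a continuous real-bilinear form. -/
noncomputable def lprodCLM : ℝ × ℝ × ℝ →L[ℝ] ℝ × ℝ × ℝ →L[ℝ] ℝ :=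
  let mul := ContinuousLinearMap.mul ℝ ℝ
  let t := ContinuousLinearMap.fst ℝ ℝ (ℝ × ℝ)
  let x := ContinuousLinearMap.fst ℝ ℝ ℝ ∘L ContinuousLinearMap.snd ℝ ℝ (ℝ × ℝ)
  let y := ContinuousLinearMap.snd ℝ ℝ ℝ ∘L ContinuousLinearMap.snd ℝ ℝ (ℝ × ℝ)
  (-mul.bilinearComp t t) + mul.bilinearComp x x + mul.bilinearComp y y

lemma lprodCLM_apply (v w : ℝ × ℝ × ℝ) : lprodCLM v w = lprod v w := rfl

lemma lprodCLM_comm (v w : ℝ × ℝ × ℝ) : lprodCLM v w = lprodCLM w v := by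
  simp only [lprodCLM_apply, lprod, mul_comm]

end LorentzMinkowski

/-- if γ_ℂ is holomorphic on a connected open U, real along a real interval I,
    and its restriction to I is a null curve in ℝ³₁, then φ = Re γ_ℂ is harmonic and
    Lorentz-conformal on all of U. -/
theorem stmt5 (U : Set ℂ) (hU : IsOpen U) (hconn : IsPreconnected U)
    (a b : ℝ) (hab : a < b) (hsub : ∀ t ∈ Ioo a b, (t : ℂ) ∈ U)
    (γC : ℂ → ℂ × ℂ × ℂ) (hγC : DifferentiableOn ℂ γC U)
    (hreal : ∀ t ∈ Ioo a b, isRealVec (γC (t : ℂ)))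
    (hnull : ∀ t ∈ Ioo a b,
      lprod (deriv (fun s : ℝ => reVec (γC (s : ℂ))) t)
            (deriv (fun s : ℝ => reVec (γC (s : ℂ))) t) = 0) :
    ∀ q : ℝ × ℝ, ((q.1 : ℂ) + q.2 * Complex.I) ∈ U →
      pd1 (pd1 (phiOf γC)) q + pd2 (pd2 (phiOf γC)) q = 0 ∧
      lprod (pd1 (phiOf γC) q) (pd1 (phiOf γC) q)
        = lprod (pd2 (phiOf γC) q) (pd2 (phiOf γC) q) ∧
      lprod (pd1 (phiOf γC) q) (pd2 (phiOf γC) q) = 0 := by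
  rw [phiOf_eq_realPartMap]
  exact stmt5_general reVecCLM lprodCLM lprodCLM_comm hU hconn hab hsub hγC
    (fun t ht => reVecCLM_I_smul_eq_zero_iff.mpr (hreal t ht)) hnull
end

section
/- Let γ : (a, b) → ℝ³ be a C² null curve in ℝ³₁ (⟨γ'(t), γ'(t)⟩ = 0, γ'(t) ≠ 0 for all t) which is non-degenerate at u₀ (γ''(u₀) is not a scalar multiple of γ'(u₀)). Define Ψ(u, v) := (γ(u+v) + γ(u−v))/2 where defined. Then: (i) Ψ_uu = Ψ_vv; (ii) ⟨Ψ_u, Ψ_u⟩ = −⟨Ψ_v, Ψ_v⟩ = (1/2)⟨γ'(u+v), γ'(u−v)⟩ and ⟨Ψ_u, Ψ_v⟩ = 0; (iii) there exists ε > 0 such that for |u − u₀| < ε and 0 < |v| < ε, the determinant of the induced metric satisfies ⟨Ψ_u,Ψ_u⟩⟨Ψ_v,Ψ_v⟩ − ⟨Ψ_u,Ψ_v⟩² < 0, i.e. Ψ is a time-like surface there. -/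
/-!
Write `p = γ'` and let `B` be the Lorentz product. The partial derivatives of `Ψ` are
`(p (u + v) ± p (u - v)) / 2`, so with `p` null the determinant of the induced metric is
`-(B (p (u + v)) (p (u - v)) / 2) ^ 2`, and the point is that `B (p s) (p t) ≠ 0` for distinct
`s, t` near `u₀`. Nullity gives `B (p s - p t) (p s - p t) = -2 * B (p s) (p t)`, while
`(p s - p t) / (s - t)` tends to `γ'' u₀` because a `C¹` function is strictly differentiable.
Finally `γ'' u₀` is space-like: it is orthogonal to the nonzero null vector `p u₀` and not a
multiple of it. This step works for every symmetric form that is positive definite on a hyperplane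
`τ = 0`; for the Lorentz product, `τ` is the time coordinate.
-/

open Set

/-- Ψ(u,v) = (γ(u+v) + γ(u−v))/2. -/
noncomputable def PsiOf (γ : ℝ → ℝ × ℝ × ℝ) (q : ℝ × ℝ) : ℝ × ℝ × ℝ :=
  (2⁻¹ : ℝ) • (γ (q.1 + q.2) + γ (q.1 - q.2))

open Filter Topology

/-- The d'Alembert solution `(u, v) ↦ (f (u + v) + g (u - v)) / 2` of the wave equation with
profiles `f` and `g`, so that `PsiOf γ = dAlembert γ γ`. Keeping the two profiles apart makes
its partial derivatives of the same form, with profiles `f', g'` and `f', -g'`. -/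
noncomputable def dAlembert {E : Type*} [NormedAddCommGroup E] [NormedSpace ℝ E]
    (f g : ℝ → E) (q : ℝ × ℝ) : E :=
  (2⁻¹ : ℝ) • (f (q.1 + q.2) + g (q.1 - q.2))

section WaveEquation

variable {E : Type*} [NormedAddCommGroup E] [NormedSpace ℝ E] {f g : ℝ → E} {q : ℝ × ℝ}

lemma hasFDerivAt_dAlembert {f' g' : E}
    (hf : HasDerivAt f f' (q.1 + q.2)) (hg : HasDerivAt g g' (q.1 - q.2)) :
    HasFDerivAt (dAlembert f g)
      ((2⁻¹ : ℝ) • ((ContinuousLinearMap.fst ℝ ℝ ℝ + ContinuousLinearMap.snd ℝ ℝ ℝ).smulRight f'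
        + (ContinuousLinearMap.fst ℝ ℝ ℝ - ContinuousLinearMap.snd ℝ ℝ ℝ).smulRight g')) q := by
  have hadd := hf.hasFDerivAt.comp q (hasFDerivAt_fst.add hasFDerivAt_snd)
  have hsub := hg.hasFDerivAt.comp q (hasFDerivAt_fst.sub hasFDerivAt_snd)
  refine ((hadd.add hsub).const_smul (2⁻¹ : ℝ)).congr_fderiv ?_
  ext <;> simp

lemma pd1_dAlembert (hf : DifferentiableAt ℝ f (q.1 + q.2))
    (hg : DifferentiableAt ℝ g (q.1 - q.2)) :
    pd1 (dAlembert f g) q = dAlembert (deriv f) (deriv g) q := by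
  simp [pd1, dAlembert, (hasFDerivAt_dAlembert hf.hasDerivAt hg.hasDerivAt).fderiv]

lemma pd2_dAlembert (hf : DifferentiableAt ℝ f (q.1 + q.2))
    (hg : DifferentiableAt ℝ g (q.1 - q.2)) :
    pd2 (dAlembert f g) q = dAlembert (deriv f) (-deriv g) q := by
  simp [pd2, dAlembert, (hasFDerivAt_dAlembert hf.hasDerivAt hg.hasDerivAt).fderiv]

lemma pd1_pd1_dAlembert_eq_pd2_pd2 (hf : ContDiffAt ℝ 2 f (q.1 + q.2))
    (hg : ContDiffAt ℝ 2 g (q.1 - q.2)) :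
    pd1 (pd1 (dAlembert f g)) q = pd2 (pd2 (dAlembert f g)) q := by
  have hdiff : ∀ᶠ r : ℝ × ℝ in 𝓝 q,
      DifferentiableAt ℝ f (r.1 + r.2) ∧ DifferentiableAt ℝ g (r.1 - r.2) := by
    have hadd : Tendsto (fun r : ℝ × ℝ => r.1 + r.2) (𝓝 q) (𝓝 (q.1 + q.2)) :=
      (continuous_fst.add continuous_snd).continuousAt
    have hsub : Tendsto (fun r : ℝ × ℝ => r.1 - r.2) (𝓝 q) (𝓝 (q.1 - q.2)) :=
      (continuous_fst.sub continuous_snd).continuousAt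
    filter_upwards [hadd.eventually (hf.eventually (by simp)),
      hsub.eventually (hg.eventually (by simp))] with r hfr hgr
    exact ⟨hfr.differentiableAt two_ne_zero, hgr.differentiableAt two_ne_zero⟩
  have hu : pd1 (dAlembert f g) =ᶠ[𝓝 q] dAlembert (deriv f) (deriv g) :=
    hdiff.mono fun r hr => pd1_dAlembert hr.1 hr.2
  have hv : pd2 (dAlembert f g) =ᶠ[𝓝 q] dAlembert (deriv f) (-deriv g) :=
    hdiff.mono fun r hr => pd2_dAlembert hr.1 hr.2
  have hf' : DifferentiableAt ℝ (deriv f) (q.1 + q.2) :=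
    (hf.derivWithin (m := 1) (by norm_num)).differentiableAt one_ne_zero
  have hg' : DifferentiableAt ℝ (deriv g) (q.1 - q.2) :=
    (hg.derivWithin (m := 1) (by norm_num)).differentiableAt one_ne_zero
  calc pd1 (pd1 (dAlembert f g)) q
      = pd1 (dAlembert (deriv f) (deriv g)) q := by rw [pd1, hu.fderiv_eq, pd1]
    _ = dAlembert (deriv (deriv f)) (deriv (deriv g)) q := pd1_dAlembert hf' hg'
    _ = pd2 (dAlembert (deriv f) (-deriv g)) q := by
      simp [pd2_dAlembert hf' hg'.neg, dAlembert]
    _ = pd2 (pd2 (dAlembert f g)) q := by rw [pd2, pd2, hv.fderiv_eq]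

end WaveEquation

section FirstFundamentalForm

variable {E : Type*} [NormedAddCommGroup E] [NormedSpace ℝ E] {B : LinearMap.BilinForm ℝ E}
  {f g : ℝ → E} {q : ℝ × ℝ}

lemma bilin_dAlembert_self (hB : B.IsSymm) (hf : B (f (q.1 + q.2)) (f (q.1 + q.2)) = 0)
    (hg : B (g (q.1 - q.2)) (g (q.1 - q.2)) = 0) :
    B (dAlembert f g q) (dAlembert f g q) = 1 / 2 * B (f (q.1 + q.2)) (g (q.1 - q.2)) := by
  simp only [dAlembert, map_smul, map_add, LinearMap.smul_apply, LinearMap.add_apply,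
    smul_eq_mul, hf, hg, hB.eq (g _) (f _)]
  ring

lemma bilin_dAlembert_dAlembert_neg (hB : B.IsSymm)
    (hf : B (f (q.1 + q.2)) (f (q.1 + q.2)) = 0) (hg : B (g (q.1 - q.2)) (g (q.1 - q.2)) = 0) :
    B (dAlembert f g q) (dAlembert f (-g) q) = 0 := by
  simp only [dAlembert, Pi.neg_apply, map_smul, map_add, map_neg, LinearMap.smul_apply,
    LinearMap.add_apply, smul_eq_mul, hf, hg, hB.eq (g _) (f _)]
  ring

end FirstFundamentalForm

section NullVelocity

lemma bilin_self_pos_of_orthogonal_null {𝕜 V : Type*} [Field 𝕜] [LinearOrder 𝕜]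
    [AddCommGroup V] [Module 𝕜 V] {B : LinearMap.BilinForm 𝕜 V} (hB : B.IsSymm)
    {τ : V →ₗ[𝕜] 𝕜} (hτ : ∀ x, τ x = 0 → x ≠ 0 → 0 < B x x) {p x : V}
    (hp : B p p = 0) (hp0 : p ≠ 0) (hpx : B p x = 0) (hx : ¬ ∃ c : 𝕜, x = c • p) :
    0 < B x x := by
  have hτp : τ p ≠ 0 := fun h => (hτ p h hp0).ne' hp
  -- Subtracting a multiple of `p` to reach `τ = 0` changes neither `B x x` nor independence.
  set y := x - (τ x / τ p) • p with hy
  have hτy : τ y = 0 := by simp [hy, hτp]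
  have hy0 : y ≠ 0 := fun h => hx ⟨_, sub_eq_zero.1 h⟩
  have hyx : B y y = B x x := by simp [hy, hp, hpx, hB.eq x p]
  exact hyx ▸ hτ y hτy hy0

variable {𝕜 E : Type*} [NontriviallyNormedField 𝕜] [NormedAddCommGroup E] [NormedSpace 𝕜 E]
  {B : E →L[𝕜] E →L[𝕜] 𝕜} {p : 𝕜 → E} {p' : E} {u : 𝕜}

lemma bilin_deriv_eq_zero_of_eventually_null [NeZero (2 : 𝕜)] (hB : B.toBilinForm.IsSymm)
    (hp : HasDerivAt p p' u) (hnull : ∀ᶠ t in 𝓝 u, B (p t) (p t) = 0) : B (p u) p' = 0 := by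
  have hderiv : HasDerivAt (fun t => B (p t) (p t)) (B p' (p u) + B (p u) p') u :=
    (B.hasFDerivAt.comp_hasDerivAt u hp).clm_apply hp
  have hzero : B p' (p u) + B (p u) p' = 0 :=
    hderiv.unique ((hasDerivAt_const u (0 : 𝕜)).congr_of_eventuallyEq hnull)
  have hsymm : B p' (p u) = B (p u) p' := hB.eq p' (p u)
  rw [hsymm, ← two_mul] at hzero
  exact (mul_eq_zero.1 hzero).resolve_left two_ne_zero

lemma tendsto_slope_of_hasStrictDerivAt (hp : HasStrictDerivAt p p' u) :
    Tendsto (fun q : 𝕜 × 𝕜 => slope p q.1 q.2) (𝓝[(diagonal 𝕜)ᶜ] (u, u)) (𝓝 p') := by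
  have hlim := (hp.isLittleO.tendsto_inv_smul_nhds_zero.mono_left
    (nhdsWithin_le_nhds (s := (diagonal 𝕜)ᶜ))).add_const p'
  rw [zero_add] at hlim
  refine hlim.congr' ?_
  filter_upwards [self_mem_nhdsWithin] with q hq
  have hne : q.1 - q.2 ≠ 0 := sub_ne_zero.2 hq
  simp [slope_comm p q.1, slope_def_module, smul_sub, hne]

lemma eventually_bilin_ne_zero_of_eventually_null (hB : B.toBilinForm.IsSymm)
    (hp : HasStrictDerivAt p p' u) (hp' : B p' p' ≠ 0)
    (hnull : ∀ᶠ t in 𝓝 u, B (p t) (p t) = 0) :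
    ∀ᶠ q in 𝓝[(diagonal 𝕜)ᶜ] (u, u), B (p q.1) (p q.2) ≠ 0 := by
  have hslope : ∀ᶠ q : 𝕜 × 𝕜 in 𝓝[(diagonal 𝕜)ᶜ] (u, u),
      B (slope p q.1 q.2) (slope p q.1 q.2) ≠ 0 := by
    have hcont : Continuous fun w : E => B w w := by fun_prop
    exact (tendsto_slope_of_hasStrictDerivAt hp).eventually
      (hcont.continuousAt.eventually_ne hp')
  have hnull₂ : ∀ᶠ q : 𝕜 × 𝕜 in 𝓝[(diagonal 𝕜)ᶜ] (u, u),
      B (p q.1) (p q.1) = 0 ∧ B (p q.2) (p q.2) = 0 :=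
    nhdsWithin_le_nhds ((hnull.prod_inl_nhds u).and (hnull.prod_inr_nhds u))
  filter_upwards [hslope, hnull₂] with q hne hq horth
  have hsymm : B (p q.2) (p q.1) = B (p q.1) (p q.2) := hB.eq _ _
  exact hne (by simp [slope_def_module, hq, hsymm, horth])

end NullVelocity

section Surface

variable {E : Type*} [NormedAddCommGroup E] [NormedSpace ℝ E] {B : E →L[ℝ] E →L[ℝ] ℝ}
  {f g : ℝ → E} {q : ℝ × ℝ}

lemma bilin_pd_dAlembert (hB : B.toBilinForm.IsSymm)
    (hf : DifferentiableAt ℝ f (q.1 + q.2)) (hg : DifferentiableAt ℝ g (q.1 - q.2))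
    (hfnull : B (deriv f (q.1 + q.2)) (deriv f (q.1 + q.2)) = 0)
    (hgnull : B (deriv g (q.1 - q.2)) (deriv g (q.1 - q.2)) = 0) :
    B (pd1 (dAlembert f g) q) (pd1 (dAlembert f g) q)
        = 1 / 2 * B (deriv f (q.1 + q.2)) (deriv g (q.1 - q.2)) ∧
      B (pd1 (dAlembert f g) q) (pd1 (dAlembert f g) q)
        = -B (pd2 (dAlembert f g) q) (pd2 (dAlembert f g) q) ∧
      B (pd1 (dAlembert f g) q) (pd2 (dAlembert f g) q) = 0 := by
  have huu := bilin_dAlembert_self hB hfnull hgnull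
  have hvv := bilin_dAlembert_self (g := -deriv g) hB hfnull (by simpa using hgnull)
  have huv := bilin_dAlembert_dAlembert_neg hB hfnull hgnull
  simp only [ContinuousLinearMap.toBilinForm_apply, Pi.neg_apply, map_neg] at huu hvv huv
  rw [pd1_dAlembert hf hg, pd2_dAlembert hf hg]
  exact ⟨huu, by rw [huu, hvv]; ring, huv⟩

lemma eventually_bilin_deriv_ne_zero (hB : B.toBilinForm.IsSymm)
    {τ : E →ₗ[ℝ] ℝ} (hτ : ∀ x, τ x = 0 → x ≠ 0 → 0 < B x x) {γ : ℝ → E} {u₀ : ℝ}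
    (hγ : ContDiffAt ℝ 2 γ u₀) (hnull : ∀ᶠ t in 𝓝 u₀, B (deriv γ t) (deriv γ t) = 0)
    (hreg : deriv γ u₀ ≠ 0) (hnd : ¬ ∃ c : ℝ, deriv (deriv γ) u₀ = c • deriv γ u₀) :
    ∀ᶠ q : ℝ × ℝ in 𝓝 (u₀, 0), q.2 ≠ 0 →
      B (deriv γ (q.1 + q.2)) (deriv γ (q.1 - q.2)) ≠ 0 := by
  have hderiv : HasStrictDerivAt (deriv γ) (deriv (deriv γ) u₀) u₀ :=
    (hγ.derivWithin (m := 1) (by norm_num)).hasStrictDerivAt one_ne_zero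
  have horth : B (deriv γ u₀) (deriv (deriv γ) u₀) = 0 :=
    bilin_deriv_eq_zero_of_eventually_null hB hderiv.hasDerivAt hnull
  have hspacelike : 0 < B (deriv (deriv γ) u₀) (deriv (deriv γ) u₀) :=
    bilin_self_pos_of_orthogonal_null hB hτ hnull.self_of_nhds hreg horth hnd
  have hne := eventually_bilin_ne_zero_of_eventually_null hB hderiv hspacelike.ne' hnull
  have hcoord : Tendsto (fun q : ℝ × ℝ => (q.1 + q.2, q.1 - q.2)) (𝓝 (u₀, 0)) (𝓝 (u₀, u₀)) := by
    have hcont : Continuous fun q : ℝ × ℝ => (q.1 + q.2, q.1 - q.2) := by fun_prop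
    simpa using hcont.tendsto (u₀, 0)
  filter_upwards [hcoord.eventually (eventually_nhdsWithin_iff.1 hne)] with q hq hq0
  exact hq fun h : q.1 + q.2 = q.1 - q.2 => hq0 (by linarith)

theorem stmt8_general (hB : B.toBilinForm.IsSymm)
    {τ : E →ₗ[ℝ] ℝ} (hτ : ∀ x, τ x = 0 → x ≠ 0 → 0 < B x x) {I : Set ℝ} (hI : IsOpen I)
    {γ : ℝ → E} (hγ : ContDiffOn ℝ 2 γ I) (hnull : ∀ t ∈ I, B (deriv γ t) (deriv γ t) = 0)
    {u₀ : ℝ} (hu₀ : u₀ ∈ I) (hreg : deriv γ u₀ ≠ 0)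
    (hnd : ¬ ∃ c : ℝ, deriv (deriv γ) u₀ = c • deriv γ u₀) :
    (∀ q : ℝ × ℝ, q.1 + q.2 ∈ I → q.1 - q.2 ∈ I →
      pd1 (pd1 (dAlembert γ γ)) q = pd2 (pd2 (dAlembert γ γ)) q ∧
      B (pd1 (dAlembert γ γ) q) (pd1 (dAlembert γ γ) q)
        = 1 / 2 * B (deriv γ (q.1 + q.2)) (deriv γ (q.1 - q.2)) ∧
      B (pd1 (dAlembert γ γ) q) (pd1 (dAlembert γ γ) q)
        = -B (pd2 (dAlembert γ γ) q) (pd2 (dAlembert γ γ) q) ∧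
      B (pd1 (dAlembert γ γ) q) (pd2 (dAlembert γ γ) q) = 0) ∧
    ∃ ε > 0, ∀ u v : ℝ, |u - u₀| < ε → 0 < |v| → |v| < ε →
      u + v ∈ I ∧ u - v ∈ I ∧
      B (pd1 (dAlembert γ γ) (u, v)) (pd1 (dAlembert γ γ) (u, v))
          * B (pd2 (dAlembert γ γ) (u, v)) (pd2 (dAlembert γ γ) (u, v))
        - (B (pd1 (dAlembert γ γ) (u, v)) (pd2 (dAlembert γ γ) (u, v))) ^ 2 < 0 := by
  have hC2 : ∀ t ∈ I, ContDiffAt ℝ 2 γ t := fun t ht => hγ.contDiffAt (hI.mem_nhds ht)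
  have hform (q : ℝ × ℝ) (hs : q.1 + q.2 ∈ I) (ht : q.1 - q.2 ∈ I) :=
    bilin_pd_dAlembert hB ((hC2 _ hs).differentiableAt two_ne_zero)
      ((hC2 _ ht).differentiableAt two_ne_zero) (hnull _ hs) (hnull _ ht)
  refine ⟨fun q hs ht => ⟨pd1_pd1_dAlembert_eq_pd2_pd2 (hC2 _ hs) (hC2 _ ht), hform q hs ht⟩, ?_⟩
  have hmem : ∀ᶠ q : ℝ × ℝ in 𝓝 (u₀, 0), q.1 + q.2 ∈ I ∧ q.1 - q.2 ∈ I :=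
    ((hI.preimage (continuous_fst.add continuous_snd)).inter
      (hI.preimage (continuous_fst.sub continuous_snd))).eventually_mem (by simpa using hu₀)
  obtain ⟨ε, hε, hnear⟩ := Metric.eventually_nhds_iff.1 <| hmem.and <|
    eventually_bilin_deriv_ne_zero hB hτ (hC2 u₀ hu₀) (hI.eventually_mem hu₀ |>.mono hnull)
      hreg hnd
  refine ⟨ε, hε, fun u v hu hv0 hv => ?_⟩
  obtain ⟨⟨hs, ht⟩, hne⟩ := hnear (y := (u, v)) (by simp [Prod.dist_eq, Real.dist_eq, hu, hv])
  obtain ⟨huu, hvv, huv⟩ := hform (u, v) hs ht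
  have hpos : 0 < B (deriv γ (u + v)) (deriv γ (u - v)) ^ 2 :=
    sq_pos_of_ne_zero (hne (abs_pos.1 hv0))
  refine ⟨hs, ht, ?_⟩
  rw [huv, ← neg_eq_iff_eq_neg.2 hvv, huu]
  linarith

end Surface

section LorentzMinkowski

/-- The inner product `lprod` of `ℝ³₁` as a continuous bilinear form. -/
noncomputable def lorentzForm : ℝ × ℝ × ℝ →L[ℝ] ℝ × ℝ × ℝ →L[ℝ] ℝ :=
  let t := ContinuousLinearMap.fst ℝ ℝ (ℝ × ℝ)
  let x := ContinuousLinearMap.fst ℝ ℝ ℝ ∘L ContinuousLinearMap.snd ℝ ℝ (ℝ × ℝ)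
  let y := ContinuousLinearMap.snd ℝ ℝ ℝ ∘L ContinuousLinearMap.snd ℝ ℝ (ℝ × ℝ)
  let mul := ContinuousLinearMap.mul ℝ ℝ;
  -mul.bilinearComp t t + mul.bilinearComp x x + mul.bilinearComp y y

lemma lorentzForm_apply (a b : ℝ × ℝ × ℝ) : lorentzForm a b = lprod a b := rfl

lemma lorentzForm_isSymm : lorentzForm.toBilinForm.IsSymm where
  eq a b := by
    simp only [ContinuousLinearMap.toBilinForm_apply, lorentzForm_apply, lprod]
    ring

lemma lorentzForm_self_pos_of_fst_eq_zero (a : ℝ × ℝ × ℝ) (ht : a.1 = 0) (ha : a ≠ 0) :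
    0 < lorentzForm a a := by
  obtain ⟨t, x, y⟩ := a
  obtain rfl : t = 0 := ht
  have hxy : x ≠ 0 ∨ y ≠ 0 := by simpa [Prod.ext_iff, or_iff_not_imp_left] using ha
  simp only [lorentzForm_apply, lprod]
  rcases hxy with hx | hy
  · nlinarith [mul_self_pos.2 hx, mul_self_nonneg y]
  · nlinarith [mul_self_pos.2 hy, mul_self_nonneg x]

end LorentzMinkowski

/-- for a C² null curve γ, Ψ(u,v) = (γ(u+v)+γ(u−v))/2 satisfies
    Ψ_uu = Ψ_vv, ⟨Ψ_u,Ψ_u⟩ = −⟨Ψ_v,Ψ_v⟩ = ½⟨γ'(u+v), γ'(u−v)⟩ and ⟨Ψ_u,Ψ_v⟩ = 0;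
    and near a non-degeneracy point u₀, for 0 < |v| small the induced metric has
    negative determinant (Ψ is time-like). -/
theorem stmt8 (a b : ℝ) (γ : ℝ → ℝ × ℝ × ℝ)
    (hγ : ContDiffOn ℝ 2 γ (Ioo a b))
    (hnull : ∀ t ∈ Ioo a b, lprod (deriv γ t) (deriv γ t) = 0 ∧ deriv γ t ≠ 0)
    (u₀ : ℝ) (hu₀ : u₀ ∈ Ioo a b)
    (hnd : ¬ ∃ c : ℝ, deriv (deriv γ) u₀ = c • deriv γ u₀) :
    (∀ q : ℝ × ℝ, q.1 + q.2 ∈ Ioo a b → q.1 - q.2 ∈ Ioo a b →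
      pd1 (pd1 (PsiOf γ)) q = pd2 (pd2 (PsiOf γ)) q ∧
      lprod (pd1 (PsiOf γ) q) (pd1 (PsiOf γ) q)
        = (1 / 2) * lprod (deriv γ (q.1 + q.2)) (deriv γ (q.1 - q.2)) ∧
      lprod (pd1 (PsiOf γ) q) (pd1 (PsiOf γ) q)
        = - lprod (pd2 (PsiOf γ) q) (pd2 (PsiOf γ) q) ∧
      lprod (pd1 (PsiOf γ) q) (pd2 (PsiOf γ) q) = 0) ∧
    ∃ ε > 0, ∀ u v : ℝ, |u - u₀| < ε → 0 < |v| → |v| < ε →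
      u + v ∈ Ioo a b ∧ u - v ∈ Ioo a b ∧
      lprod (pd1 (PsiOf γ) (u, v)) (pd1 (PsiOf γ) (u, v))
          * lprod (pd2 (PsiOf γ) (u, v)) (pd2 (PsiOf γ) (u, v))
        - (lprod (pd1 (PsiOf γ) (u, v)) (pd2 (PsiOf γ) (u, v))) ^ 2 < 0 :=
  stmt8_general lorentzForm_isSymm (τ := LinearMap.fst ℝ ℝ (ℝ × ℝ))
    lorentzForm_self_pos_of_fst_eq_zero isOpen_Ioo hγ (fun t ht => (hnull t ht).1) hu₀
    (hnull u₀ hu₀).2 hnd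
end

section
/- The function f : ℝ² → ℝ, f(x, y) = y tanh x, satisfies the zero mean curvature equation (1 − f_y²) f_xx + 2 f_x f_y f_xy + (1 − f_x²) f_yy = 0 on all of ℝ². Moreover, with B := 1 − f_x² − f_y², one has B(x, y) = sech⁴(x) · (cosh²x − y²); hence B = 0 exactly on the two disjoint curves y = cosh x and y = −cosh x, B > 0 (graph space-like) for |y| < cosh x, B < 0 (graph time-like) for |y| > cosh x, and every point with B = 0 is a non-degenerate point of type change, i.e. ∇B ≠ 0 there. -/
/-!
The graph of `f(x, y) = y g(x)` is a right conoid, and along it `f_x = y g'`, `f_y = g`,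
`f_xx = y g''`, `f_xy = g'`, `f_yy = 0`, so the zero mean curvature equation becomes
`y ((1 - g²) g'' + 2 g g'²) = 0`. The function `g = tanh` solves it because the Riccati equation
`g' = 1 - g²` gives `g'' = -2 g g'`. The same equation turns `B = 1 - g² - y² g'²` into
`g'² (1 / g' - y²)`, where `g' = 1 / cosh²`. For every `g` one has `B_y = -2 y g'²`, so `B_y`
alone is nonzero on the curves `y = ± cosh x`.
-/

open Set

/-- Kobayashi's entire zero mean curvature graph C₀ : f(x,y) = y tanh x. -/
noncomputable def f10 : ℝ × ℝ → ℝ := fun q => q.2 * Real.tanh q.1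

section PartialDerivatives

variable {E : Type*} [NormedAddCommGroup E] [NormedSpace ℝ E]
  {F : ℝ × ℝ → E} {q : ℝ × ℝ} {d : E}

theorem pd1_eq_of_hasDerivAt (hF : DifferentiableAt ℝ F q)
    (hd : HasDerivAt (fun x => F (x, q.2)) d q.1) : pd1 F q = d :=
  (hF.hasFDerivAt.comp_hasDerivAt (f := fun x => (x, q.2)) q.1
    ((hasDerivAt_id q.1).prodMk (hasDerivAt_const q.1 q.2))).unique hd

theorem pd2_eq_of_hasDerivAt (hF : DifferentiableAt ℝ F q)
    (hd : HasDerivAt (fun y => F (q.1, y)) d q.2) : pd2 F q = d :=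
  (hF.hasFDerivAt.comp_hasDerivAt (f := fun y => (q.1, y)) q.2
    ((hasDerivAt_const q.2 q.1).prodMk (hasDerivAt_id q.2))).unique hd

theorem pd2_comp_fst {g : ℝ → E} (hg : DifferentiableAt ℝ g q.1) :
    pd2 (fun p => g p.1) q = 0 :=
  pd2_eq_of_hasDerivAt (hg.comp q differentiableAt_fst) (hasDerivAt_const q.2 (g q.1))

end PartialDerivatives

/-- The height function `(x, y) ↦ y g(x)`. Its graph is the right conoid swept out by the lines
through the points `(0, x, 0)` with direction `(g(x), 0, 1)`, in the coordinates `(t, x, y)`. -/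
def rightConoid (g : ℝ → ℝ) : ℝ × ℝ → ℝ := fun q => q.2 * g q.1

section RightConoid

variable {g g' : ℝ → ℝ} {q : ℝ × ℝ}

theorem differentiableAt_rightConoid (hg : DifferentiableAt ℝ g q.1) :
    DifferentiableAt ℝ (rightConoid g) q :=
  differentiableAt_snd.mul (hg.comp q differentiableAt_fst)

theorem pd1_rightConoid {d : ℝ} (hg : HasDerivAt g d q.1) :
    pd1 (rightConoid g) q = q.2 * d :=
  pd1_eq_of_hasDerivAt (differentiableAt_rightConoid hg.differentiableAt) (hg.const_mul q.2)

theorem pd2_rightConoid (hg : DifferentiableAt ℝ g q.1) : pd2 (rightConoid g) q = g q.1 :=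
  pd2_eq_of_hasDerivAt (differentiableAt_rightConoid hg) (hasDerivAt_mul_const (g q.1))

theorem zmcAt_rightConoid_iff {d : ℝ} (hg : ∀ x, HasDerivAt g (g' x) x)
    (hg' : HasDerivAt g' d q.1) :
    ZMCAt (rightConoid g) q ↔ q.2 * ((1 - g q.1 ^ 2) * d + 2 * g q.1 * g' q.1 ^ 2) = 0 := by
  have hfx : pd1 (rightConoid g) = rightConoid g' := funext fun p => pd1_rightConoid (hg p.1)
  have hfy : pd2 (rightConoid g) = fun p => g p.1 :=
    funext fun p => pd2_rightConoid (hg p.1).differentiableAt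
  have hfxx : pd1 (rightConoid g') q = q.2 * d := pd1_rightConoid hg'
  have hfxy : pd2 (rightConoid g') q = g' q.1 := pd2_rightConoid hg'.differentiableAt
  have hfyy : pd2 (fun p => g p.1) q = 0 := pd2_comp_fst (hg q.1).differentiableAt
  rw [ZMCAt, hfx, hfy, hfxx, hfxy, hfyy, rightConoid]
  ring_nf

theorem Bfun_rightConoid {d : ℝ} (hg : HasDerivAt g d q.1) :
    Bfun (rightConoid g) q = 1 - (q.2 * d) ^ 2 - g q.1 ^ 2 := by
  rw [Bfun, pd1_rightConoid hg, pd2_rightConoid hg.differentiableAt]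

theorem pd2_Bfun_rightConoid (hg : ∀ x, HasDerivAt g (g' x) x)
    (hg' : DifferentiableAt ℝ g' q.1) :
    pd2 (Bfun (rightConoid g)) q = -(2 * q.2 * g' q.1 ^ 2) := by
  have hB : Bfun (rightConoid g) = fun p => 1 - (p.2 * g' p.1) ^ 2 - g p.1 ^ 2 :=
    funext fun p => Bfun_rightConoid (hg p.1)
  have hg_diff : DifferentiableAt ℝ g q.1 := (hg q.1).differentiableAt
  rw [hB]
  refine pd2_eq_of_hasDerivAt (by fun_prop) ?_
  refine ((((hasDerivAt_mul_const (g' q.1)).fun_pow 2).const_sub 1).sub_const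
    (g q.1 ^ 2)).congr_deriv ?_
  ring

end RightConoid

theorem one_sub_tanh_sq (x : ℝ) : 1 - Real.tanh x ^ 2 = (Real.cosh x ^ 2)⁻¹ := by
  have hcosh : Real.cosh x ≠ 0 := (Real.cosh_pos x).ne'
  rw [Real.tanh_eq_sinh_div_cosh, div_pow, Real.sinh_sq]
  field_simp
  ring

theorem hasDerivAt_tanh (x : ℝ) : HasDerivAt Real.tanh (1 - Real.tanh x ^ 2) x := by
  have hcosh : Real.cosh x ≠ 0 := (Real.cosh_pos x).ne'
  rw [funext Real.tanh_eq_sinh_div_cosh]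
  refine ((Real.hasDerivAt_sinh x).fun_div (Real.hasDerivAt_cosh x) hcosh).congr_deriv ?_
  field_simp

theorem hasDerivAt_one_sub_tanh_sq (x : ℝ) :
    HasDerivAt (fun x => 1 - Real.tanh x ^ 2) (-(2 * Real.tanh x * (1 - Real.tanh x ^ 2))) x := by
  simpa using ((hasDerivAt_tanh x).fun_pow 2).const_sub 1

theorem f10_eq_rightConoid_tanh : f10 = rightConoid Real.tanh := rfl

theorem zmcAt_f10 (q : ℝ × ℝ) : ZMCAt f10 q := by
  rw [f10_eq_rightConoid_tanh,
    zmcAt_rightConoid_iff hasDerivAt_tanh (hasDerivAt_one_sub_tanh_sq q.1)]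
  ring

theorem Bfun_f10 (q : ℝ × ℝ) :
    Bfun f10 q = (Real.cosh q.1)⁻¹ ^ 4 * (Real.cosh q.1 ^ 2 - q.2 ^ 2) := by
  have hcosh : Real.cosh q.1 ≠ 0 := (Real.cosh_pos q.1).ne'
  calc Bfun f10 q
      = (1 - Real.tanh q.1 ^ 2) - q.2 ^ 2 * (1 - Real.tanh q.1 ^ 2) ^ 2 := by
        rw [f10_eq_rightConoid_tanh, Bfun_rightConoid (hasDerivAt_tanh q.1)]
        ring
    _ = (Real.cosh q.1)⁻¹ ^ 4 * (Real.cosh q.1 ^ 2 - q.2 ^ 2) := by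
        rw [one_sub_tanh_sq]
        field_simp

theorem Bfun_f10_eq_zero_iff (q : ℝ × ℝ) :
    Bfun f10 q = 0 ↔ q.2 = Real.cosh q.1 ∨ q.2 = -Real.cosh q.1 := by
  have hsech : (Real.cosh q.1)⁻¹ ^ 4 ≠ 0 := pow_ne_zero 4 (inv_ne_zero (Real.cosh_pos q.1).ne')
  rw [Bfun_f10, mul_eq_zero_iff_left hsech, sub_eq_zero, eq_comm, sq_eq_sq_iff_eq_or_eq_neg]

theorem Bfun_f10_pos_iff (q : ℝ × ℝ) : 0 < Bfun f10 q ↔ |q.2| < Real.cosh q.1 := by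
  have hsech : 0 < (Real.cosh q.1)⁻¹ ^ 4 := pow_pos (inv_pos.2 (Real.cosh_pos q.1)) 4
  rw [Bfun_f10, mul_pos_iff_of_pos_left hsech, sub_pos, sq_lt_sq,
    abs_of_pos (Real.cosh_pos q.1)]

theorem Bfun_f10_neg_iff (q : ℝ × ℝ) : Bfun f10 q < 0 ↔ Real.cosh q.1 < |q.2| := by
  have hsech : 0 < (Real.cosh q.1)⁻¹ ^ 4 := pow_pos (inv_pos.2 (Real.cosh_pos q.1)) 4
  rw [Bfun_f10, ← smul_eq_mul, smul_neg_iff_of_pos_left hsech, sub_neg, sq_lt_sq,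
    abs_of_pos (Real.cosh_pos q.1)]

theorem pd2_Bfun_f10_ne_zero {q : ℝ × ℝ} (hB : Bfun f10 q = 0) : pd2 (Bfun f10) q ≠ 0 := by
  have hcosh : Real.cosh q.1 ≠ 0 := (Real.cosh_pos q.1).ne'
  have hy : q.2 ≠ 0 := by
    rcases (Bfun_f10_eq_zero_iff q).1 hB with h | h <;> simpa only [h, neg_ne_zero] using hcosh
  rw [f10_eq_rightConoid_tanh, pd2_Bfun_rightConoid hasDerivAt_tanh
    (hasDerivAt_one_sub_tanh_sq q.1).differentiableAt, one_sub_tanh_sq]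
  exact neg_ne_zero.2 (by positivity)

/-- f(x,y) = y tanh x satisfies the ZMC equation everywhere;
    B = sech⁴x (cosh²x − y²); B = 0 exactly on y = ± cosh x; B > 0 for |y| < cosh x,
    B < 0 for |y| > cosh x; and ∇B ≠ 0 wherever B = 0. -/
theorem stmt10 :
    (∀ q : ℝ × ℝ, ZMCAt f10 q) ∧
    (∀ q : ℝ × ℝ, Bfun f10 q
      = ((Real.cosh q.1)⁻¹) ^ 4 * ((Real.cosh q.1) ^ 2 - q.2 ^ 2)) ∧
    (∀ q : ℝ × ℝ, (Bfun f10 q = 0 ↔ q.2 = Real.cosh q.1 ∨ q.2 = -Real.cosh q.1)) ∧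
    (∀ q : ℝ × ℝ, |q.2| < Real.cosh q.1 → 0 < Bfun f10 q) ∧
    (∀ q : ℝ × ℝ, Real.cosh q.1 < |q.2| → Bfun f10 q < 0) ∧
    (∀ q : ℝ × ℝ, Bfun f10 q = 0 → (pd1 (Bfun f10) q, pd2 (Bfun f10) q) ≠ (0, 0)) := by
  refine ⟨zmcAt_f10, Bfun_f10, Bfun_f10_eq_zero_iff, fun q => (Bfun_f10_pos_iff q).2,
    fun q => (Bfun_f10_neg_iff q).2, fun q hB hgrad => ?_⟩
  exact pd2_Bfun_f10_ne_zero hB (congrArg Prod.snd hgrad)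
end

section
/- For all u, v ∈ ℝ, the point (t, x, y) := ((sinh u − sinh v)/2, (u − v)/2, (cosh u + cosh v)/2) satisfies t = y tanh x. That is, the image of the conjugate φ₂*(u,v) = (1/2)(sinh u − sinh v, u − v, cosh u + cosh v) of the time-like hyperbolic catenoid parametrization is contained in the entire zero mean curvature graph C₀ = {(t,x,y) : t = y tanh x}. -/
theorem sinh_sub_sinh (x y : ℝ) :
    Real.sinh x - Real.sinh y = 2 * Real.cosh ((x + y) / 2) * Real.sinh ((x - y) / 2) := by
  have hx : x = (x + y) / 2 + (x - y) / 2 := by ring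
  have hy : y = (x + y) / 2 - (x - y) / 2 := by ring
  calc Real.sinh x - Real.sinh y
      = Real.sinh ((x + y) / 2 + (x - y) / 2) - Real.sinh ((x + y) / 2 - (x - y) / 2) := by
        rw [← hx, ← hy]
    _ = 2 * Real.cosh ((x + y) / 2) * Real.sinh ((x - y) / 2) := by
        rw [Real.sinh_add, Real.sinh_sub]
        ring

theorem cosh_add_cosh (x y : ℝ) :
    Real.cosh x + Real.cosh y = 2 * Real.cosh ((x + y) / 2) * Real.cosh ((x - y) / 2) := by
  have hx : x = (x + y) / 2 + (x - y) / 2 := by ring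
  have hy : y = (x + y) / 2 - (x - y) / 2 := by ring
  calc Real.cosh x + Real.cosh y
      = Real.cosh ((x + y) / 2 + (x - y) / 2) + Real.cosh ((x + y) / 2 - (x - y) / 2) := by
        rw [← hx, ← hy]
    _ = 2 * Real.cosh ((x + y) / 2) * Real.cosh ((x - y) / 2) := by
        rw [Real.cosh_add, Real.cosh_sub]
        ring

theorem cosh_mul_tanh (x : ℝ) : Real.cosh x * Real.tanh x = Real.sinh x := by
  rw [Real.tanh_eq_sinh_div_cosh, mul_div_cancel₀ _ (Real.cosh_pos x).ne']

/-- the conjugate φ₂*(u,v) = ½(sinh u − sinh v, u − v, cosh u + cosh v) of the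
    time-like hyperbolic catenoid lies in Kobayashi's entire zero mean curvature graph
    C₀ = {t = y tanh x}. -/
theorem stmt12 (u v : ℝ) :
    (Real.sinh u - Real.sinh v) / 2
      = ((Real.cosh u + Real.cosh v) / 2) * Real.tanh ((u - v) / 2) := by
  rw [sinh_sub_sinh, cosh_add_cosh, ← cosh_mul_tanh ((u - v) / 2)]
  ring
end

section
/- For all u, v ∈ (0, π/2), define t := (1/2)(log(cot u) − log(cot v)), x := (1/4)(log((1−cos u)/(1+cos u)) − log((1−cos v)/(1+cos v))), and y := (1/4)(log((1+sin u)/(1−sin u)) − log((1+sin v)/(1−sin v))). Then the identities cosh t = sin(u+v)/√(sin 2u · sin 2v), cosh x = sin((u+v)/2)/√(sin u · sin v), and cosh y = cos((u+v)/2)/√(cos u · cos v) hold. (These are the identities showing that the conjugate of the time-like Scherk surface of the first kind lies on the entire zero mean curvature graph S₀.) -/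
open Set Real

/-!
All three identities are instances of one: for `a, b ∈ (0, π/2)`,
`cosh (½ (log tan a - log tan b)) = sin (a + b) / √(sin 2a · sin 2b)`.
Indeed the argument equals `½ (log A - log B)` with `A = sin a cos b` and `B = cos a sin b`, and
`cosh (½ (log A - log B)) = (A + B) / (2 √(A B))`.

The identity for `t` is the case `(a, b) = (u, v)`, since `cot = tan⁻¹` and `cosh` is even. Since
`(1 - cos u) / (1 + cos u) = tan² (u/2)`, the identity for `x` is the case `(u/2, v/2)`. Shifting
`u` and `v` by `π/2` turns the identity for `x` into the one for `y`.
-/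

lemma cosh_half_mul_log_sub_log {A B : ℝ} (hA : 0 < A) (hB : 0 < B) :
    cosh ((1 / 2) * (log A - log B)) = (A + B) / (2 * √(A * B)) := by
  have harg : (1 / 2) * (log A - log B) = log (√A / √B) := by
    rw [log_div (by positivity) (by positivity), log_sqrt hA.le, log_sqrt hB.le]
    ring
  calc cosh ((1 / 2) * (log A - log B))
      = (√A / √B + (√A / √B)⁻¹) / 2 := by rw [harg, cosh_log (by positivity)]
    _ = (√A ^ 2 + √B ^ 2) / (2 * (√A * √B)) := by field
    _ = (A + B) / (2 * √(A * B)) := by rw [sq_sqrt hA.le, sq_sqrt hB.le, sqrt_mul hA.le]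

lemma log_tan_sub_log_tan {a b : ℝ} (hsa : sin a ≠ 0) (hca : cos a ≠ 0)
    (hsb : sin b ≠ 0) (hcb : cos b ≠ 0) :
    log (tan a) - log (tan b) = log (sin a * cos b) - log (cos a * sin b) := by
  rw [tan_eq_sin_div_cos, tan_eq_sin_div_cos, log_div hsa hca, log_div hsb hcb,
    log_mul hsa hcb, log_mul hca hsb]
  ring

lemma two_mul_sqrt_sin_mul_cos_mul (a b : ℝ) :
    2 * √(sin a * cos b * (cos a * sin b)) = √(sin (2 * a) * sin (2 * b)) := by
  have hprod : sin (2 * a) * sin (2 * b) = 2 ^ 2 * (sin a * cos b * (cos a * sin b)) := by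
    rw [sin_two_mul, sin_two_mul]
    ring
  rw [hprod, sqrt_mul (sq_nonneg 2), sqrt_sq zero_le_two]

lemma sin_pos_and_cos_pos_of_mem_Ioo {a : ℝ} (ha : a ∈ Ioo 0 (π / 2)) : 0 < sin a ∧ 0 < cos a :=
  ⟨sin_pos_of_mem_Ioo ⟨ha.1, ha.2.trans (half_lt_self pi_pos)⟩,
    cos_pos_of_mem_Ioo ⟨(neg_lt_zero.mpr pi_div_two_pos).trans ha.1, ha.2⟩⟩

theorem cosh_half_mul_log_tan_sub_log_tan {a b : ℝ}
    (ha : a ∈ Ioo 0 (π / 2)) (hb : b ∈ Ioo 0 (π / 2)) :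
    cosh ((1 / 2) * (log (tan a) - log (tan b)))
      = sin (a + b) / √(sin (2 * a) * sin (2 * b)) := by
  obtain ⟨hsa, hca⟩ := sin_pos_and_cos_pos_of_mem_Ioo ha
  obtain ⟨hsb, hcb⟩ := sin_pos_and_cos_pos_of_mem_Ioo hb
  rw [log_tan_sub_log_tan hsa.ne' hca.ne' hsb.ne' hcb.ne',
    cosh_half_mul_log_sub_log (mul_pos hsa hcb) (mul_pos hca hsb),
    two_mul_sqrt_sin_mul_cos_mul, sin_add]

theorem cosh_half_mul_log_cot_sub_log_cot {u v : ℝ}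
    (hu : u ∈ Ioo 0 (π / 2)) (hv : v ∈ Ioo 0 (π / 2)) :
    cosh ((1 / 2) * (log (cos u / sin u) - log (cos v / sin v)))
      = sin (u + v) / √(sin (2 * u) * sin (2 * v)) := by
  have hlog (w : ℝ) : log (cos w / sin w) = -log (tan w) := by
    rw [tan_eq_sin_div_cos, ← log_inv, inv_div]
  rw [← cosh_half_mul_log_tan_sub_log_tan hu hv, hlog, hlog, ← cosh_neg]
  congr 1
  ring

lemma one_sub_cos_div_one_add_cos (u : ℝ) : (1 - cos u) / (1 + cos u) = tan (u / 2) ^ 2 := by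
  have hsin : 1 - cos u = 2 * sin (u / 2) ^ 2 := by
    rw [sin_sq_eq_half_sub, mul_div_cancel₀ u two_ne_zero]
    ring
  have hcos : 1 + cos u = 2 * cos (u / 2) ^ 2 := by
    rw [cos_sq, mul_div_cancel₀ u two_ne_zero]
    ring
  rw [hsin, hcos, mul_div_mul_left _ _ two_ne_zero, tan_eq_sin_div_cos, div_pow]

theorem cosh_quarter_mul_log_one_sub_cos_div_sub {u v : ℝ}
    (hu : u ∈ Ioo 0 π) (hv : v ∈ Ioo 0 π) :
    cosh ((1 / 4) * (log ((1 - cos u) / (1 + cos u)) - log ((1 - cos v) / (1 + cos v))))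
      = sin ((u + v) / 2) / √(sin u * sin v) := by
  have half_mem {w : ℝ} (hw : w ∈ Ioo 0 π) : w / 2 ∈ Ioo 0 (π / 2) :=
    ⟨half_pos hw.1, div_lt_div_of_pos_right hw.2 two_pos⟩
  have htan := cosh_half_mul_log_tan_sub_log_tan (half_mem hu) (half_mem hv)
  rw [mul_div_cancel₀ u two_ne_zero, mul_div_cancel₀ v two_ne_zero, ← add_div] at htan
  rw [← htan, one_sub_cos_div_one_add_cos, one_sub_cos_div_one_add_cos, log_pow, log_pow]
  congr 1
  push_cast
  ring

theorem cosh_quarter_mul_log_one_add_sin_div_sub {u v : ℝ}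
    (hu : u ∈ Ioo (-(π / 2)) (π / 2)) (hv : v ∈ Ioo (-(π / 2)) (π / 2)) :
    cosh ((1 / 4) * (log ((1 + sin u) / (1 - sin u)) - log ((1 + sin v) / (1 - sin v))))
      = cos ((u + v) / 2) / √(cos u * cos v) := by
  have shift_mem {w : ℝ} (hw : w ∈ Ioo (-(π / 2)) (π / 2)) : w + π / 2 ∈ Ioo 0 π :=
    ⟨by linarith [hw.1], by linarith [hw.2]⟩
  have hmid : (u + π / 2 + (v + π / 2)) / 2 = (u + v) / 2 + π / 2 := by ring
  simpa only [hmid, cos_add_pi_div_two, sin_add_pi_div_two, sub_neg_eq_add, ← sub_eq_add_neg]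
    using cosh_quarter_mul_log_one_sub_cos_div_sub (shift_mem hu) (shift_mem hv)

/-- the identities showing that the conjugate of the time-like Scherk surface
    of the first kind lies on the entire zero mean curvature graph S₀. For u, v ∈ (0, π/2),
    with t = ½(log cot u − log cot v), x = ¼(log((1−cos u)/(1+cos u)) − log((1−cos v)/(1+cos v))),
    y = ¼(log((1+sin u)/(1−sin u)) − log((1+sin v)/(1−sin v))):
    cosh t = sin(u+v)/√(sin 2u sin 2v), cosh x = sin((u+v)/2)/√(sin u sin v),
    cosh y = cos((u+v)/2)/√(cos u cos v). -/
theorem stmt13 (u v : ℝ) (hu : u ∈ Ioo 0 (π / 2)) (hv : v ∈ Ioo 0 (π / 2)) :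
    Real.cosh ((1 / 2) * (Real.log (Real.cos u / Real.sin u)
        - Real.log (Real.cos v / Real.sin v)))
      = Real.sin (u + v) / Real.sqrt (Real.sin (2 * u) * Real.sin (2 * v)) ∧
    Real.cosh ((1 / 4) * (Real.log ((1 - Real.cos u) / (1 + Real.cos u))
        - Real.log ((1 - Real.cos v) / (1 + Real.cos v))))
      = Real.sin ((u + v) / 2) / Real.sqrt (Real.sin u * Real.sin v) ∧
    Real.cosh ((1 / 4) * (Real.log ((1 + Real.sin u) / (1 - Real.sin u))
        - Real.log ((1 + Real.sin v) / (1 - Real.sin v))))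
      = Real.cos ((u + v) / 2) / Real.sqrt (Real.cos u * Real.cos v) := by
  have Ioo_subset_Ioo_zero_pi : Ioo 0 (π / 2) ⊆ Ioo 0 π :=
    Ioo_subset_Ioo_right (half_le_self pi_nonneg)
  have Ioo_subset_Ioo_symm : Ioo 0 (π / 2) ⊆ Ioo (-(π / 2)) (π / 2) :=
    Ioo_subset_Ioo_left (neg_nonpos.mpr pi_div_two_pos.le)
  exact ⟨cosh_half_mul_log_cot_sub_log_cot hu hv,
    cosh_quarter_mul_log_one_sub_cos_div_sub (Ioo_subset_Ioo_zero_pi hu)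
      (Ioo_subset_Ioo_zero_pi hv),
    cosh_quarter_mul_log_one_add_sin_div_sub (Ioo_subset_Ioo_symm hu) (Ioo_subset_Ioo_symm hv)⟩
end

section
/- Let Ω ⊆ ℝ² be open and let u, v, ρ, p, c, ψ : Ω → ℝ be functions with ρ, u, v of class C¹, ψ of class C², ρ > 0 and c > 0 on Ω, satisfying: (barotropicity) p_x = c² ρ_x and p_y = c² ρ_y; (steady Euler equations) u u_x + v v_x + p_x/ρ = 0 and u u_y + v v_y + p_y/ρ = 0; (stream function) ψ_x = −ρ v and ψ_y = ρ u. Then at every point of Ω: (ρ²c² − ψ_y²) ψ_xx + 2 ψ_x ψ_y ψ_xy + (ρ²c² − ψ_x²) ψ_yy = ρ³ (u² + v² − c²)(v_x − u_y). In particular, if the flow is irrotational (v_x = u_y), then ψ satisfies (ρ²c² − ψ_y²) ψ_xx + 2 ψ_x ψ_y ψ_xy + (ρ²c² − ψ_x²) ψ_yy = 0. -/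
/-!
In the equation for the stream function the coefficient of `ρ²c²` is the Laplacian of `ψ`, and the
rest is minus the Hessian of `ψ` evaluated at the mass flux `(ψ_y, -ψ_x) = ρ(u, v)`. Two expressions
for `ψ_xy` come from differentiating `ψ_x = -ρv` and `ψ_y = ρu`; using each of them for one of the
two mixed terms of the Hessian cancels all derivatives of `ρ` and leaves the cross product of the
convective acceleration with the velocity. The derivatives of `ρ` in `c²Δψ` are eliminated by the
Euler equations, which for a barotropic flow read `c²∇ρ = -ρ(u∇u + v∇v)`.
-/

open Set

open Filter Topology

section SecondDerivative

variable {𝕜 E F : Type*} [NontriviallyNormedField 𝕜] [NormedAddCommGroup E] [NormedSpace 𝕜 E]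
  [NormedAddCommGroup F] [NormedSpace 𝕜 F]

lemma fderiv_fderiv_apply {f : E → F} {x : E} (hf : DifferentiableAt 𝕜 (fderiv 𝕜 f) x) (a b : E) :
    fderiv 𝕜 (fun z ↦ fderiv 𝕜 f z a) x b = fderiv 𝕜 (fderiv 𝕜 f) x b a := by
  simp [fderiv_clm_apply hf (differentiableAt_const a)]

end SecondDerivative

section PartialDerivative

variable {E : Type*} [NormedAddCommGroup E] [NormedSpace ℝ E] {f g : ℝ × ℝ → E} {q : ℝ × ℝ}

lemma pd1_congr_of_eventuallyEq (h : f =ᶠ[𝓝 q] g) : pd1 f q = pd1 g q := by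
  rw [pd1, pd1, h.fderiv_eq]

lemma pd2_congr_of_eventuallyEq (h : f =ᶠ[𝓝 q] g) : pd2 f q = pd2 g q := by
  rw [pd2, pd2, h.fderiv_eq]

lemma pd1_neg : pd1 (-f) q = -pd1 f q := by
  rw [pd1, pd1, fderiv_neg, neg_apply]

lemma pd2_neg : pd2 (-f) q = -pd2 f q := by
  rw [pd2, pd2, fderiv_neg, neg_apply]

lemma fderiv_eq_coprod_pd (f : ℝ × ℝ → E) (q : ℝ × ℝ) :
    fderiv ℝ f q = (ContinuousLinearMap.toSpanSingleton ℝ (pd1 f q)).coprod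
      (ContinuousLinearMap.toSpanSingleton ℝ (pd2 f q)) := by
  ext <;> simp [pd1, pd2]

lemma differentiableAt_fderiv_of_pd (h₁ : DifferentiableAt ℝ (pd1 f) q)
    (h₂ : DifferentiableAt ℝ (pd2 f) q) : DifferentiableAt ℝ (fderiv ℝ f) q := by
  let toSpan : E ≃L[ℝ] (ℝ →L[ℝ] E) := ContinuousLinearMap.toSpanSingletonCLE
  let glue : ((ℝ →L[ℝ] E) × (ℝ →L[ℝ] E)) ≃L[ℝ] (ℝ × ℝ →L[ℝ] E) :=
    ContinuousLinearMap.coprodEquivL ℝ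
  have hfderiv : fderiv ℝ f = fun z ↦ glue (toSpan (pd1 f z), toSpan (pd2 f z)) :=
    funext (fderiv_eq_coprod_pd f)
  rw [hfderiv]
  fun_prop

lemma pd1_pd2_comm (hf : ∀ᶠ z in 𝓝 q, DifferentiableAt ℝ f z) (h₁ : DifferentiableAt ℝ (pd1 f) q)
    (h₂ : DifferentiableAt ℝ (pd2 f) q) : pd1 (pd2 f) q = pd2 (pd1 f) q := by
  have hf' : DifferentiableAt ℝ (fderiv ℝ f) q := differentiableAt_fderiv_of_pd h₁ h₂
  calc pd1 (pd2 f) q = fderiv ℝ (fderiv ℝ f) q (1, 0) (0, 1) := fderiv_fderiv_apply hf' _ _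
    _ = fderiv ℝ (fderiv ℝ f) q (0, 1) (1, 0) :=
      second_derivative_symmetric_of_eventually (hf.mono fun _ hz ↦ hz.hasFDerivAt)
        hf'.hasFDerivAt _ _
    _ = pd2 (pd1 f) q := (fderiv_fderiv_apply hf' _ _).symm

end PartialDerivative

section Product

variable {A : Type*} [NormedRing A] [NormedAlgebra ℝ A] {f g : ℝ × ℝ → A} {q : ℝ × ℝ}

lemma pd1_mul (hf : DifferentiableAt ℝ f q) (hg : DifferentiableAt ℝ g q) :
    pd1 (f * g) q = f q * pd1 g q + pd1 f q * g q := by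
  simp [pd1, fderiv_mul' hf hg]

lemma pd2_mul (hf : DifferentiableAt ℝ f q) (hg : DifferentiableAt ℝ g q) :
    pd2 (f * g) q = f q * pd2 g q + pd2 f q * g q := by
  simp [pd2, fderiv_mul' hf hg]

end Product

/-- `ψ` is a stream function near `q` for a steady plane flow with density `ρ` and velocity
`(u, v)`: `ψ_x = -ρv` and `ψ_y = ρu`. Differentiability of `ψ` is a field because `pd1 ψ` and
`pd2 ψ` take the junk value `0` where it fails. -/
structure IsStreamFunctionAt (ρ u v ψ : ℝ × ℝ → ℝ) (q : ℝ × ℝ) : Prop where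
  eventually_differentiableAt : ∀ᶠ z in 𝓝 q, DifferentiableAt ℝ ψ z
  pd1_eventuallyEq : pd1 ψ =ᶠ[𝓝 q] -(ρ * v)
  pd2_eventuallyEq : pd2 ψ =ᶠ[𝓝 q] ρ * u

namespace IsStreamFunctionAt

variable {ρ u v ψ : ℝ × ℝ → ℝ} {q : ℝ × ℝ}

lemma of_isOpen {Ω : Set (ℝ × ℝ)} (hΩ : IsOpen Ω) (hq : q ∈ Ω) (hψ : DifferentiableOn ℝ ψ Ω)
    (h₁ : ∀ z ∈ Ω, pd1 ψ z = -(ρ z * v z)) (h₂ : ∀ z ∈ Ω, pd2 ψ z = ρ z * u z) :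
    IsStreamFunctionAt ρ u v ψ q where
  eventually_differentiableAt := hψ.eventually_differentiableAt (hΩ.mem_nhds hq)
  pd1_eventuallyEq := eventually_of_mem (hΩ.mem_nhds hq) h₁
  pd2_eventuallyEq := eventually_of_mem (hΩ.mem_nhds hq) h₂

lemma pd1_eq (h : IsStreamFunctionAt ρ u v ψ q) : pd1 ψ q = -(ρ q * v q) :=
  h.pd1_eventuallyEq.eq_of_nhds

lemma pd2_eq (h : IsStreamFunctionAt ρ u v ψ q) : pd2 ψ q = ρ q * u q :=
  h.pd2_eventuallyEq.eq_of_nhds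

lemma pd1_pd1_eq (h : IsStreamFunctionAt ρ u v ψ q) (hρ : DifferentiableAt ℝ ρ q)
    (hv : DifferentiableAt ℝ v q) :
    pd1 (pd1 ψ) q = -(ρ q * pd1 v q + pd1 ρ q * v q) := by
  rw [pd1_congr_of_eventuallyEq h.pd1_eventuallyEq, pd1_neg, pd1_mul hρ hv]

lemma pd2_pd1_eq (h : IsStreamFunctionAt ρ u v ψ q) (hρ : DifferentiableAt ℝ ρ q)
    (hv : DifferentiableAt ℝ v q) :
    pd2 (pd1 ψ) q = -(ρ q * pd2 v q + pd2 ρ q * v q) := by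
  rw [pd2_congr_of_eventuallyEq h.pd1_eventuallyEq, pd2_neg, pd2_mul hρ hv]

lemma pd1_pd2_eq (h : IsStreamFunctionAt ρ u v ψ q) (hρ : DifferentiableAt ℝ ρ q)
    (hu : DifferentiableAt ℝ u q) :
    pd1 (pd2 ψ) q = ρ q * pd1 u q + pd1 ρ q * u q := by
  rw [pd1_congr_of_eventuallyEq h.pd2_eventuallyEq, pd1_mul hρ hu]

lemma pd2_pd2_eq (h : IsStreamFunctionAt ρ u v ψ q) (hρ : DifferentiableAt ℝ ρ q)
    (hu : DifferentiableAt ℝ u q) :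
    pd2 (pd2 ψ) q = ρ q * pd2 u q + pd2 ρ q * u q := by
  rw [pd2_congr_of_eventuallyEq h.pd2_eventuallyEq, pd2_mul hρ hu]

lemma mixed_pd_comm (h : IsStreamFunctionAt ρ u v ψ q) (hρ : DifferentiableAt ℝ ρ q)
    (hu : DifferentiableAt ℝ u q) (hv : DifferentiableAt ℝ v q) :
    pd1 (pd2 ψ) q = pd2 (pd1 ψ) q :=
  pd1_pd2_comm h.eventually_differentiableAt
    ((hρ.mul hv).neg.congr_of_eventuallyEq h.pd1_eventuallyEq)
    ((hρ.mul hu).congr_of_eventuallyEq h.pd2_eventuallyEq)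

lemma laplacian_eq (h : IsStreamFunctionAt ρ u v ψ q) (hρ : DifferentiableAt ℝ ρ q)
    (hu : DifferentiableAt ℝ u q) (hv : DifferentiableAt ℝ v q) :
    pd1 (pd1 ψ) q + pd2 (pd2 ψ) q
      = -(ρ q * (pd1 v q - pd2 u q)) + (u q * pd2 ρ q - v q * pd1 ρ q) := by
  rw [h.pd1_pd1_eq hρ hv, h.pd2_pd2_eq hρ hu]
  ring

lemma hessian_massFlux_eq (h : IsStreamFunctionAt ρ u v ψ q) (hρ : DifferentiableAt ℝ ρ q)
    (hu : DifferentiableAt ℝ u q) (hv : DifferentiableAt ℝ v q) :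
    (pd2 ψ q) ^ 2 * pd1 (pd1 ψ) q - 2 * pd1 ψ q * pd2 ψ q * pd2 (pd1 ψ) q
        + (pd1 ψ q) ^ 2 * pd2 (pd2 ψ) q
      = (ρ q) ^ 3 * (v q * (u q * pd1 u q + v q * pd2 u q)
          - u q * (u q * pd1 v q + v q * pd2 v q)) := by
  have hxy_of_ψx : pd2 (pd1 ψ) q = -(ρ q * pd2 v q + pd2 ρ q * v q) := h.pd2_pd1_eq hρ hv
  have hxy_of_ψy : pd2 (pd1 ψ) q = ρ q * pd1 u q + pd1 ρ q * u q :=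
    (h.mixed_pd_comm hρ hu hv).symm.trans (h.pd1_pd2_eq hρ hu)
  rw [h.pd1_eq, h.pd2_eq, h.pd1_pd1_eq hρ hv, h.pd2_pd2_eq hρ hu]
  linear_combination (ρ q) ^ 2 * u q * v q * (hxy_of_ψx + hxy_of_ψy)

end IsStreamFunctionAt

lemma sq_mul_eq_neg_mul_of_barotropic_euler {K : Type*} [Field K] {ρ c p' ρ' k : K} (hρ : ρ ≠ 0)
    (hbaro : p' = c ^ 2 * ρ') (heuler : k + p' / ρ = 0) : c ^ 2 * ρ' = -(ρ * k) := by
  rw [← hbaro, eq_neg_of_add_eq_zero_left heuler]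
  field_simp

theorem stmt15_general {u v ρ p c ψ : ℝ × ℝ → ℝ} {q : ℝ × ℝ}
    (hρ : DifferentiableAt ℝ ρ q) (hu : DifferentiableAt ℝ u q) (hv : DifferentiableAt ℝ v q)
    (hρ0 : ρ q ≠ 0)
    (hbaro1 : pd1 p q = (c q) ^ 2 * pd1 ρ q) (hbaro2 : pd2 p q = (c q) ^ 2 * pd2 ρ q)
    (heuler1 : u q * pd1 u q + v q * pd1 v q + pd1 p q / ρ q = 0)
    (heuler2 : u q * pd2 u q + v q * pd2 v q + pd2 p q / ρ q = 0)
    (hψ : IsStreamFunctionAt ρ u v ψ q) :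
    ((ρ q) ^ 2 * (c q) ^ 2 - (pd2 ψ q) ^ 2) * pd1 (pd1 ψ) q
        + 2 * pd1 ψ q * pd2 ψ q * pd2 (pd1 ψ) q
        + ((ρ q) ^ 2 * (c q) ^ 2 - (pd1 ψ q) ^ 2) * pd2 (pd2 ψ) q
      = (ρ q) ^ 3 * ((u q) ^ 2 + (v q) ^ 2 - (c q) ^ 2) * (pd1 v q - pd2 u q) := by
  have hρx : (c q) ^ 2 * pd1 ρ q = -(ρ q * (u q * pd1 u q + v q * pd1 v q)) :=
    sq_mul_eq_neg_mul_of_barotropic_euler hρ0 hbaro1 heuler1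
  have hρy : (c q) ^ 2 * pd2 ρ q = -(ρ q * (u q * pd2 u q + v q * pd2 v q)) :=
    sq_mul_eq_neg_mul_of_barotropic_euler hρ0 hbaro2 heuler2
  linear_combination (ρ q) ^ 2 * (c q) ^ 2 * hψ.laplacian_eq hρ hu hv
    - hψ.hessian_massFlux_eq hρ hu hv + (ρ q) ^ 2 * (u q * hρy - v q * hρx)

/-- for a two-dimensional barotropic steady flow without external forces,
    the stream function satisfies
    (ρ²c² − ψ_y²)ψ_xx + 2ψ_xψ_yψ_xy + (ρ²c² − ψ_x²)ψ_yy = ρ³(u² + v² − c²)(v_x − u_y);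
    in particular, for irrotational flow the left-hand side vanishes. -/
theorem stmt15 (Ω : Set (ℝ × ℝ)) (hΩ : IsOpen Ω)
    (u v ρ p c ψ : ℝ × ℝ → ℝ)
    (hρ : ContDiffOn ℝ 1 ρ Ω) (hu : ContDiffOn ℝ 1 u Ω) (hv : ContDiffOn ℝ 1 v Ω)
    (hψ : ContDiffOn ℝ 2 ψ Ω)
    (hρpos : ∀ q ∈ Ω, 0 < ρ q) (hcpos : ∀ q ∈ Ω, 0 < c q)
    (hbaro1 : ∀ q ∈ Ω, pd1 p q = (c q) ^ 2 * pd1 ρ q)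
    (hbaro2 : ∀ q ∈ Ω, pd2 p q = (c q) ^ 2 * pd2 ρ q)
    (heuler1 : ∀ q ∈ Ω, u q * pd1 u q + v q * pd1 v q + pd1 p q / ρ q = 0)
    (heuler2 : ∀ q ∈ Ω, u q * pd2 u q + v q * pd2 v q + pd2 p q / ρ q = 0)
    (hstream1 : ∀ q ∈ Ω, pd1 ψ q = -(ρ q * v q))
    (hstream2 : ∀ q ∈ Ω, pd2 ψ q = ρ q * u q) :
    (∀ q ∈ Ω,
      ((ρ q) ^ 2 * (c q) ^ 2 - (pd2 ψ q) ^ 2) * pd1 (pd1 ψ) q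
        + 2 * pd1 ψ q * pd2 ψ q * pd2 (pd1 ψ) q
        + ((ρ q) ^ 2 * (c q) ^ 2 - (pd1 ψ q) ^ 2) * pd2 (pd2 ψ) q
      = (ρ q) ^ 3 * ((u q) ^ 2 + (v q) ^ 2 - (c q) ^ 2) * (pd1 v q - pd2 u q)) ∧
    (∀ q ∈ Ω, pd1 v q = pd2 u q →
      ((ρ q) ^ 2 * (c q) ^ 2 - (pd2 ψ q) ^ 2) * pd1 (pd1 ψ) q
        + 2 * pd1 ψ q * pd2 ψ q * pd2 (pd1 ψ) q
        + ((ρ q) ^ 2 * (c q) ^ 2 - (pd1 ψ q) ^ 2) * pd2 (pd2 ψ) q = 0) := by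
  have hmain := fun q (hq : q ∈ Ω) ↦
    have hΩq : Ω ∈ 𝓝 q := hΩ.mem_nhds hq
    stmt15_general ((hρ.contDiffAt hΩq).differentiableAt one_ne_zero)
      ((hu.contDiffAt hΩq).differentiableAt one_ne_zero)
      ((hv.contDiffAt hΩq).differentiableAt one_ne_zero) (hρpos q hq).ne'
      (hbaro1 q hq) (hbaro2 q hq) (heuler1 q hq) (heuler2 q hq)
      (.of_isOpen hΩ hq (hψ.differentiableOn two_ne_zero) hstream1 hstream2)
  exact ⟨hmain, fun q hq hirr ↦ by rw [hmain q hq, hirr, sub_self, mul_zero]⟩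
end
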